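/- arXiv:2307.15352 — 3 statements merged into one kernel-verified Lean document; each statement's English description precedes it below -/
import Mathlib

section
/- Let n ≥ 1, let a ∈ 𝒮(ℝⁿ) with ‖a‖_{L²(ℝⁿ)} = 1, let κ ∈ 𝒮(ℝⁿ×ℝⁿ), and define the symbol σ(x,ξ) = ∫_{ℝⁿ} κ(x,y) e^{−2πi y·ξ} dy. Then for every f ∈ 𝒮(ℝⁿ) and every w ∈ ℝⁿ, Op^{Wick,a}(σ)f(w) = ∫_{ℝⁿ} f(w−y) κ^{Wick}(w,y) dy, where κ^{Wick}(x,y) = ∫_{ℝⁿ} a(z−y) conj(a(z)) κ(x−z, y) dz. (Lemma A.1: the Wick quantization is a Kohn–Nirenberg operator with the Wick convolution kernel.) -/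
open MeasureTheory Complex

noncomputable section

/-- `e^{2πit}`. -/
def expi (t : ℝ) : ℂ := Complex.exp (2 * (Real.pi : ℂ) * Complex.I * (t : ℂ))

/-- Dot product on `ℝⁿ`. -/
def dotp {n : ℕ} (x y : Fin n → ℝ) : ℝ := ∑ i, x i * y i

/-- Euclidean Fourier transform `𝓕f(ξ) = ∫ f(y) e^{-2πi y·ξ} dy`. -/
def FT {n : ℕ} (f : (Fin n → ℝ) → ℂ) (ξ : Fin n → ℝ) : ℂ :=
  ∫ y, f y * expi (-(dotp y ξ))

/-- Bargmann-type transform `B_a[f](x,ξ) = ∫ f(y) a(y-x) e^{-2πi y·ξ} dy`. -/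
def Barg {n : ℕ} (a f : (Fin n → ℝ) → ℂ) (x ξ : Fin n → ℝ) : ℂ :=
  ∫ y, f y * a (y - x) * expi (-(dotp y ξ))

/-- Wick quantization with window `a`. -/
def WickOp {n : ℕ} (a : (Fin n → ℝ) → ℂ) (σ : (Fin n → ℝ) → (Fin n → ℝ) → ℂ)
    (f : (Fin n → ℝ) → ℂ) (y : Fin n → ℝ) : ℂ :=
  ∫ p : (Fin n → ℝ) × (Fin n → ℝ),
    σ p.1 p.2 * Barg a f p.1 p.2 * (starRingEnd ℂ) (a (y - p.1)) * expi (dotp y p.2)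

/-- Kohn–Nirenberg quantization. -/
def OpKN {n : ℕ} (σ : (Fin n → ℝ) → (Fin n → ℝ) → ℂ) (f : (Fin n → ℝ) → ℂ)
    (x : Fin n → ℝ) : ℂ :=
  ∫ ξ, expi (dotp x ξ) * σ x ξ * FT f ξ

/-- Partial derivative in the `i`-th coordinate direction. -/
def pd {n : ℕ} (i : Fin n) (F : (Fin n → ℝ) → ℂ) : (Fin n → ℝ) → ℂ :=
  fun x => fderiv ℝ F x (Pi.single i 1)

/-- Multi-index derivative `∂^α`. -/
def md {n : ℕ} (α : Fin n → ℕ) (F : (Fin n → ℝ) → ℂ) : (Fin n → ℝ) → ℂ :=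
  (((List.finRange n).map fun i => (pd i)^[α i]).foldr (· ∘ ·) id) F

/-- Mixed derivative `∂_x^β ∂_ξ^α σ`. -/
def mixedD {n : ℕ} (β α : Fin n → ℕ) (σ : (Fin n → ℝ) → (Fin n → ℝ) → ℂ) :
    (Fin n → ℝ) → (Fin n → ℝ) → ℂ :=
  fun x ξ => md β (fun x' => md α (fun ξ' => σ x' ξ') ξ) x

/-- The weight `1 + |ξ|²` (Euclidean norm squared). -/
def wt {n : ℕ} (ξ : Fin n → ℝ) : ℝ := 1 + ∑ i, ξ i ^ 2

/-- Length `|α|` of a multi-index, as a real number. -/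
def mOrd {n : ℕ} (α : Fin n → ℕ) : ℝ := ∑ i, (α i : ℝ)

/-- The Hörmander class `S^m_{ρ,δ}(ℝⁿ)`. -/
def SymbolClass {n : ℕ} (m ρ δ : ℝ) (σ : (Fin n → ℝ) → (Fin n → ℝ) → ℂ) : Prop :=
  (ContDiff ℝ (⊤ : ℕ∞) fun p : (Fin n → ℝ) × (Fin n → ℝ) => σ p.1 p.2) ∧
  ∀ α β : Fin n → ℕ, ∃ C > 0, ∀ x ξ,
    ‖mixedD β α σ x ξ‖ ≤ C * wt ξ ^ ((m - ρ * mOrd α + δ * mOrd β) / 2)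

/-- The seminorm `‖σ‖_{S^m_{ρ,δ},α,β}`. -/
def hSem {n : ℕ} (m ρ δ : ℝ) (α β : Fin n → ℕ)
    (σ : (Fin n → ℝ) → (Fin n → ℝ) → ℂ) : ℝ :=
  ⨆ p : (Fin n → ℝ) × (Fin n → ℝ),
    wt p.2 ^ (-(m - ρ * mOrd α + δ * mOrd β) / 2) * ‖mixedD β α σ p.1 p.2‖

/-- Squared Sobolev norm `‖f‖²_{H^s}`. -/
def sobSq {n : ℕ} (s : ℝ) (f : (Fin n → ℝ) → ℂ) : ℝ :=
  ∫ ξ, wt ξ ^ s * ‖FT f ξ‖ ^ 2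

end

open scoped FourierTransform SchwartzMap

theorem expi_norm (t : ℝ) : ‖expi t‖ = 1 := by
  have : expi t = Complex.exp (((2 * Real.pi * t : ℝ) : ℂ) * Complex.I) := by
    unfold expi; congr 1; push_cast; ring
  rw [this, Complex.norm_exp_ofReal_mul_I]

theorem expi_add (s t : ℝ) : expi (s + t) = expi s * expi t := by
  unfold expi; rw [← Complex.exp_add]; congr 1; push_cast; ring

theorem expi_continuous : Continuous expi := by
  unfold expi; fun_prop

theorem dotp_continuous {n : ℕ} : Continuous fun p : (Fin n → ℝ) × (Fin n → ℝ) => dotp p.1 p.2 := by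
  unfold dotp; fun_prop

/-- transfer to Euclidean space -/
noncomputable def toE {n : ℕ} (g : 𝓢(Fin n → ℝ, ℂ)) : 𝓢(EuclideanSpace ℝ (Fin n), ℂ) :=
  SchwartzMap.compCLMOfContinuousLinearEquiv ℂ (EuclideanSpace.equiv (Fin n) ℝ) g

theorem toE_apply {n : ℕ} (g : 𝓢(Fin n → ℝ, ℂ)) (x : Fin n → ℝ) :
    toE g (WithLp.toLp 2 x) = g x := rfl

theorem int_E {n : ℕ} {F : Type*} [NormedAddCommGroup F] [NormedSpace ℝ F]
    (F : EuclideanSpace ℝ (Fin n) → F) :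
    ∫ x, F x = ∫ x : Fin n → ℝ, F (WithLp.toLp 2 x) :=
  ((PiLp.volume_preserving_toLp (Fin n)).integral_comp
    (MeasurableEquiv.toLp 2 (Fin n → ℝ)).measurableEmbedding F).symm

theorem integrable_E {n : ℕ} {F : EuclideanSpace ℝ (Fin n) → ℝ} (h : Integrable F) :
    Integrable fun x : Fin n → ℝ => F (WithLp.toLp 2 x) :=
  ((PiLp.volume_preserving_toLp (Fin n)).integrable_comp_emb
    (MeasurableEquiv.toLp 2 (Fin n → ℝ)).measurableEmbedding).2 h

theorem inner_dotp {n : ℕ} (x y : Fin n → ℝ) :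
    inner ℝ (WithLp.toLp 2 x : EuclideanSpace ℝ (Fin n)) (WithLp.toLp 2 y) = dotp x y := by
  simp [dotp, PiLp.inner_apply, mul_comm]

theorem FT_toE {n : ℕ} (g : 𝓢(Fin n → ℝ, ℂ)) (ξ : Fin n → ℝ) :
    FT g ξ = 𝓕 (toE g) (WithLp.toLp 2 ξ) := by
  rw [SchwartzMap.fourier_coe, Real.fourier_eq', int_E]
  unfold FT
  congr 1; ext y
  rw [inner_dotp, toE_apply, smul_eq_mul, mul_comm]
  congr 1
  unfold expi; congr 1; push_cast; ring

theorem FTinv_toE {n : ℕ} (g : 𝓢(Fin n → ℝ, ℂ)) (ξ : Fin n → ℝ) :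
    𝓕⁻ (toE g) (WithLp.toLp 2 ξ) = ∫ y, g y * expi (dotp y ξ) := by
  rw [SchwartzMap.fourierInv_coe, Real.fourierInv_eq', int_E]
  congr 1; ext y
  rw [inner_dotp, toE_apply, smul_eq_mul, mul_comm]
  congr 1
  unfold expi; congr 1; push_cast; ring

theorem FT_sq_integrable {n : ℕ} (g : 𝓢(Fin n → ℝ, ℂ)) :
    Integrable fun ξ => ‖FT g ξ‖ ^ 2 := by
  simp_rw [FT_toE]
  exact integrable_E (F := fun x => ‖𝓕 (toE g) x‖ ^ 2)
    (((𝓕 (toE g)).memLp 2).integrable_norm_pow (by norm_num))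

theorem FT_plancherel {n : ℕ} (g : 𝓢(Fin n → ℝ, ℂ)) :
    ∫ ξ, ‖FT g ξ‖ ^ 2 = ∫ y, ‖g y‖ ^ 2 := by
  simp_rw [FT_toE]
  have := SchwartzMap.integral_norm_sq_fourier (toE g)
  rw [int_E, int_E] at this
  exact this

/-- `y ↦ h (w - y)` -/
noncomputable def refl' {n : ℕ} (w : Fin n → ℝ) (h : 𝓢(Fin n → ℝ, ℂ)) : 𝓢(Fin n → ℝ, ℂ) :=
  SchwartzMap.compCLMOfAntilipschitz ℂ (K := 1) (g := fun y => w - y)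
    (by fun_prop)
    (AntilipschitzWith.of_le_mul_dist fun x y => by
      rw [dist_eq_norm (w - x), sub_sub_sub_cancel_left, ← dist_eq_norm, dist_comm y]; simp) h

theorem refl'_apply {n : ℕ} (w : Fin n → ℝ) (h : 𝓢(Fin n → ℝ, ℂ)) (y) :
    refl' w h y = h (w - y) := rfl

theorem dotp_sub {n : ℕ} (w y ξ : Fin n → ℝ) : dotp (w - y) ξ = dotp w ξ + -dotp y ξ := by
  simp only [dotp, Pi.sub_apply, sub_mul, Finset.sum_sub_distrib]
  ring

theorem FT_conv {n : ℕ} (g h : 𝓢(Fin n → ℝ, ℂ)) (w : Fin n → ℝ) :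
    ∫ ξ, FT g ξ * FT h ξ * expi (dotp w ξ) = ∫ y, g y * h (w - y) := by
  have key := SchwartzMap.integral_fourier_mul_eq (toE g) (𝓕⁻ (toE (refl' w h)))
  rw [FourierTransform.fourier_fourierInv_eq, int_E, int_E] at key
  simp only [toE_apply, refl'_apply] at key
  rw [← key]
  congr 1; ext ξ
  rw [← FT_toE, FTinv_toE, mul_assoc]
  congr 1
  rw [← integral_sub_left_eq_self _ _ w]
  unfold FT
  rw [← integral_mul_const]
  congr 1; ext y
  rw [refl'_apply, dotp_sub, expi_add]
  simp only [sub_sub_cancel]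
  ring

/-- slice -/
noncomputable def slice {n : ℕ} (κ : 𝓢((Fin n → ℝ) × (Fin n → ℝ), ℂ)) (x : Fin n → ℝ) :
    𝓢(Fin n → ℝ, ℂ) :=
  SchwartzMap.compCLMOfAntilipschitz ℂ (K := 1) (g := fun y => (x, y))
    (by
      have : (fun y : Fin n → ℝ => (x, y)) =
        fun y => (x, (0 : Fin n → ℝ)) + ContinuousLinearMap.inr ℝ (Fin n → ℝ) (Fin n → ℝ) y := by
        ext y <;> simp
      rw [this]
      fun_prop)
    (AntilipschitzWith.of_le_mul_dist fun x y => by simp [Prod.dist_eq]) κ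

theorem slice_apply {n : ℕ} (κ : 𝓢((Fin n → ℝ) × (Fin n → ℝ), ℂ)) (x y : Fin n → ℝ) :
    slice κ x y = κ (x, y) := rfl

noncomputable def hx {n : ℕ} (a f : 𝓢(Fin n → ℝ, ℂ)) (x : Fin n → ℝ) : 𝓢(Fin n → ℝ, ℂ) :=
  SchwartzMap.pairing (ContinuousLinearMap.mul ℂ ℂ) f (a.compSubConstCLM ℂ x)

theorem hx_apply {n : ℕ} (a f : 𝓢(Fin n → ℝ, ℂ)) (x y : Fin n → ℝ) :
    hx a f x y = f y * a (y - x) := rfl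

theorem bdd {n : ℕ} (a : 𝓢(Fin n → ℝ, ℂ)) : ∃ M, ∀ x, ‖a x‖ ≤ M :=
  ⟨_, fun x => SchwartzMap.norm_le_seminorm ℝ a x⟩

theorem wick_kernel (n : ℕ) (hn : 1 ≤ n)
    (a : SchwartzMap (Fin n → ℝ) ℂ) (ha : (∫ y, ‖a y‖ ^ 2) = 1)
    (κ : SchwartzMap ((Fin n → ℝ) × (Fin n → ℝ)) ℂ)
    (σ : (Fin n → ℝ) → (Fin n → ℝ) → ℂ)
    (hσ : ∀ x ξ, σ x ξ = ∫ y, κ (x, y) * expi (-(dotp y ξ)))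
    (f : SchwartzMap (Fin n → ℝ) ℂ) (w : Fin n → ℝ) :
    WickOp (⇑a) σ (⇑f) w
      = ∫ y, f (w - y) * (∫ z, a (z - y) * (starRingEnd ℂ) (a z) * κ (w - z, y)) := by
  have hσ' : ∀ x ξ, σ x ξ = FT (slice κ x) ξ := hσ
  have hB : ∀ x ξ, Barg a f x ξ = FT (hx a f x) ξ := fun _ _ => rfl
  obtain ⟨A, hA⟩ := bdd a
  obtain ⟨Bf, hBf⟩ := bdd f
  have hA0 : 0 ≤ A := (norm_nonneg _).trans (hA 0)
  have hB0 : 0 ≤ Bf := (norm_nonneg _).trans (hBf 0)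
  have hHaar : (volume : Measure ((Fin n → ℝ) × (Fin n → ℝ))).IsAddHaarMeasure :=
    Measure.prod.instIsAddHaarMeasure (volume : Measure (Fin n → ℝ)) (volume : Measure (Fin n → ℝ))
  have ca := a.continuous
  have cf := f.continuous
  have ck := κ.continuous
  have ce := expi_continuous
  have cd : ∀ {X : Type} [TopologicalSpace X] {u v : X → Fin n → ℝ}, Continuous u →
      Continuous v → Continuous fun x => dotp (u x) (v x) := fun hu hv =>
    dotp_continuous.comp (hu.prodMk hv)
  -- measurability
  have mσ : StronglyMeasurable fun p : (Fin n → ℝ) × (Fin n → ℝ) => σ p.1 p.2 := by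
    simp_rw [hσ]
    refine StronglyMeasurable.integral_prod_right
      (f := fun (p : (Fin n → ℝ) × (Fin n → ℝ)) y => κ (p.1, y) * expi (-(dotp y p.2))) ?_
    refine Continuous.stronglyMeasurable ?_
    have := cd (X := ((Fin n → ℝ) × (Fin n → ℝ)) × (Fin n → ℝ)) (u := fun q => q.2)
      (v := fun q => q.1.2) (by fun_prop) (by fun_prop)
    simp only [Function.uncurry_def]
    fun_prop
  have mB : StronglyMeasurable fun p : (Fin n → ℝ) × (Fin n → ℝ) => Barg a f p.1 p.2 := by
    unfold Barg
    refine StronglyMeasurable.integral_prod_right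
      (f := fun (p : (Fin n → ℝ) × (Fin n → ℝ)) y => f y * a (y - p.1) * expi (-(dotp y p.2))) ?_
    refine Continuous.stronglyMeasurable ?_
    have := cd (X := ((Fin n → ℝ) × (Fin n → ℝ)) × (Fin n → ℝ)) (u := fun q => q.2)
      (v := fun q => q.1.2) (by fun_prop) (by fun_prop)
    simp only [Function.uncurry_def]
    fun_prop
  have mG : StronglyMeasurable fun p : (Fin n → ℝ) × (Fin n → ℝ) =>
      σ p.1 p.2 * Barg a f p.1 p.2 * (starRingEnd ℂ) (a (w - p.1)) * expi (dotp w p.2) := by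
    have h1 : Continuous fun p : (Fin n → ℝ) × (Fin n → ℝ) => (starRingEnd ℂ) (a (w - p.1)) :=
      Complex.continuous_conj.comp (by fun_prop)
    have h2 : Continuous fun p : (Fin n → ℝ) × (Fin n → ℝ) => expi (dotp w p.2) :=
      ce.comp (cd continuous_const continuous_snd)
    exact ((mσ.mul mB).mul h1.stronglyMeasurable).mul h2.stronglyMeasurable
  have nG : ∀ x ξ, ‖σ x ξ * Barg a f x ξ * (starRingEnd ℂ) (a (w - x)) * expi (dotp w ξ)‖
      ≤ ‖a (w - x)‖ * (‖FT (slice κ x) ξ‖ ^ 2 + ‖FT (hx a f x) ξ‖ ^ 2) := by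
    intro x ξ
    rw [norm_mul, norm_mul, norm_mul, expi_norm, RCLike.norm_conj, hσ', hB, mul_one, mul_comm]
    gcongr
    nlinarith [sq_nonneg (‖FT (slice κ x) ξ‖ - ‖FT (hx a f x) ξ‖),
      sq_nonneg (‖FT (slice κ x) ξ‖), sq_nonneg (‖FT (hx a f x) ξ‖)]
  have iR : ∀ x, Integrable fun ξ =>
      ‖a (w - x)‖ * (‖FT (slice κ x) ξ‖ ^ 2 + ‖FT (hx a f x) ξ‖ ^ 2) := fun x =>
    ((FT_sq_integrable _).add (FT_sq_integrable _)).const_mul _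
  have iaw : Integrable fun x => ‖a (w - x)‖ := (a.integrable.comp_sub_left w).norm
  have iκ2 : Integrable fun p : (Fin n → ℝ) × (Fin n → ℝ) => ‖κ p‖ ^ 2 :=
    (κ.memLp 2).integrable_norm_pow (by norm_num)
  have if2 : Integrable fun p : (Fin n → ℝ) => ‖f p‖ ^ 2 :=
    (f.memLp 2).integrable_norm_pow (by norm_num)
  have iG : Integrable fun p : (Fin n → ℝ) × (Fin n → ℝ) =>
      σ p.1 p.2 * Barg a f p.1 p.2 * (starRingEnd ℂ) (a (w - p.1)) * expi (dotp w p.2) := by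
    rw [Measure.volume_eq_prod]
    rw [integrable_prod_iff mG.aestronglyMeasurable]
    constructor
    · refine ae_of_all _ fun x => ?_
      exact (iR x).mono' (mG.comp_measurable measurable_prodMk_left).aestronglyMeasurable
        (ae_of_all _ (nG x))
    · have iK : Integrable fun x => A * ∫ y, ‖κ (x, y)‖ ^ 2 := by
        rw [Measure.volume_eq_prod] at iκ2
        exact iκ2.integral_prod_left.const_mul A
      have iH : Integrable fun x => ‖a (w - x)‖ * (A ^ 2 * ∫ y, ‖f y‖ ^ 2) := iaw.mul_const _
      refine (iK.add iH).mono' ?_ (ae_of_all _ fun x => ?_)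
      · exact (mG.norm.integral_prod_right' (ν := volume)).aestronglyMeasurable
      · rw [Real.norm_of_nonneg (integral_nonneg fun _ => norm_nonneg _)]
        refine (integral_mono_of_nonneg (ae_of_all _ fun _ => norm_nonneg _) (iR x)
          (ae_of_all _ (nG x))).trans ?_
        rw [integral_const_mul, integral_add (FT_sq_integrable _) (FT_sq_integrable _),
          FT_plancherel, FT_plancherel, mul_add]
        simp only [Pi.add_apply]
        gcongr ?_ + ?_
        · exact mul_le_mul_of_nonneg_right (hA _) (integral_nonneg fun _ => by positivity)
        · refine mul_le_mul_of_nonneg_left ?_ (norm_nonneg _)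
          rw [← integral_const_mul]
          refine integral_mono_of_nonneg (ae_of_all _ fun _ => by positivity) (if2.const_mul _)
            (ae_of_all _ fun y => ?_)
          simp only [hx_apply, norm_mul, mul_pow]
          rw [mul_comm]
          gcongr
          exact hA _
  have iF : Integrable fun p : (Fin n → ℝ) × (Fin n → ℝ) =>
      (f (w - p.2) * a (w - p.2 - p.1) * (starRingEnd ℂ) (a (w - p.1))) * κ p := by
    refine (κ.integrable (μ := volume)).bdd_mul (c := Bf * A * A) ?_ (ae_of_all _ fun p => ?_)
    · have h1 : Continuous fun p : (Fin n → ℝ) × (Fin n → ℝ) => (starRingEnd ℂ) (a (w - p.1)) :=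
        Complex.continuous_conj.comp (by fun_prop)
      exact Continuous.aestronglyMeasurable (by fun_prop)
    · rw [norm_mul, norm_mul, RCLike.norm_conj]
      gcongr
      · exact hBf _
      · exact hA _
      · exact hA _
  unfold WickOp
  rw [Measure.volume_eq_prod] at iG iF ⊢
  rw [integral_prod _ iG]
  have e1 : ∀ x, ∫ ξ, σ x ξ * Barg a f x ξ * (starRingEnd ℂ) (a (w - x)) * expi (dotp w ξ)
      = ∫ y, (f (w - y) * a (w - y - x) * (starRingEnd ℂ) (a (w - x))) * κ (x, y) := by
    intro x
    have := congrArg (· * (starRingEnd ℂ) (a (w - x))) (FT_conv (slice κ x) (hx a f x) w)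
    simp only [← integral_mul_const] at this
    refine Eq.trans (integral_congr_ae (ae_of_all _ fun ξ => ?_))
      (this.trans (integral_congr_ae (ae_of_all _ fun y => ?_)))
    · simp only [hσ', hB]; ring
    · simp only [slice_apply, hx_apply]; ring
  simp only [e1]
  rw [integral_integral_swap iF]
  congr 1; ext y
  rw [← integral_sub_left_eq_self _ _ w, ← integral_const_mul]
  congr 1; ext z
  simp only [sub_sub_cancel]
  rw [show w - y - (w - z) = z - y by abel]
  ring
end

section
/- Let n ≥ 1, m ∈ ℝ, 1 ≥ ρ ≥ δ ≥ 0, and fix multi-indices α, β. There is a constant C > 0 depending only on n and β such that for every σ ∈ S^m_{ρ,δ}(ℝⁿ) and every φ ∈ 𝒮(ℝⁿ) with ∫_{ℝⁿ} φ(y) dy = 1, one has for all (x,ξ): (1+|ξ|²)^{−(m+δ−ρ|α|+δ|β|)/2} |∂_x^β ∂_ξ^α (σ∗φ − σ)(x,ξ)| ≤ C (∫_{ℝⁿ} |y| |φ(y)| dy) · max_{|β'| = |β|+1} ‖σ‖_{S^m_{ρ,δ},α,β'}, where (σ∗φ)(x,ξ) = ∫_{ℝⁿ} φ(z) σ(x−z,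 ξ) dz. In particular σ∗φ − σ ∈ S^{m+δ}_{ρ,δ}(ℝⁿ). (Euclidean analogue of Lemma 3.4(2).) -/
open MeasureTheory Complex

section absops
variable {ι X Y : Type*}

def opL (A : ι → X → X) (l : List ι) (β : ι → ℕ) : X → X :=
  (l.map fun i => (A i)^[β i]).foldr (· ∘ ·) id

theorem opL_cons (A : ι → X → X) (j : ι) (l : List ι) (β : ι → ℕ) (f : X) :
    opL A (j :: l) β f = (A j)^[β j] (opL A l β f) := rfl

theorem iter_pres {A : X → X} {P : X → Prop} (h : ∀ f, P f → P (A f)) (k : ℕ) :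
    ∀ f, P f → P (A^[k] f) := by
  induction k with
  | zero => intro f hf; exact hf
  | succ k ih => intro f hf; exact ih _ (h f hf)

theorem opL_pres {A : ι → X → X} {P : X → Prop} (h : ∀ i f, P f → P (A i f)) (l : List ι)
    (β : ι → ℕ) (f : X) (hf : P f) : P (opL A l β f) := by
  induction l with
  | nil => exact hf
  | cons j l ih => rw [opL_cons]; exact iter_pres (h j) _ _ ih

theorem iter_intertw {A : X → X} {B : Y → Y} {P : X → Prop} {S : X → Y}
    (h : ∀ f, P f → P (A f)) (hS : ∀ f, P f → S (A f) = B (S f)) (k : ℕ) :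
    ∀ f, P f → S (A^[k] f) = B^[k] (S f) := by
  induction k with
  | zero => intro f hf; rfl
  | succ k ih =>
    intro f hf
    rw [Function.iterate_succ_apply, Function.iterate_succ_apply, ih _ (h f hf), hS f hf]

theorem opL_intertw {A : ι → X → X} {B : ι → Y → Y} {P : X → Prop} {S : X → Y}
    (h : ∀ i f, P f → P (A i f)) (hS : ∀ i f, P f → S (A i f) = B i (S f)) (l : List ι)
    (β : ι → ℕ) (f : X) (hf : P f) : S (opL A l β f) = opL B l β (S f) := by
  induction l with
  | nil => rfl
  | cons j l ih =>
    rw [opL_cons, opL_cons, iter_intertw (h j) (hS j) _ _ (opL_pres h l β f hf), ih]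

theorem opL_congr {A : ι → X → X} (l : List ι) (β γ : ι → ℕ) (h : ∀ i ∈ l, β i = γ i) (f : X) :
    opL A l β f = opL A l γ f := by
  induction l with
  | nil => rfl
  | cons j l ih =>
    rw [opL_cons, opL_cons, h j (by simp), ih (fun i hi => h i (by simp [hi]))]

theorem opL_succ [DecidableEq ι] {A : ι → X → X} {P : X → Prop}
    (h : ∀ i f, P f → P (A i f)) (hc : ∀ i j f, P f → A i (A j f) = A j (A i f)) (l : List ι)
    (hl : l.Nodup) (i : ι) (hi : i ∈ l)
    (β : ι → ℕ) (f : X) (hf : P f) :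
    opL A l (β + Pi.single i 1) f = opL A l β (A i f) := by
  induction l with
  | nil => simp at hi
  | cons j l ih =>
    rw [List.nodup_cons] at hl
    rw [opL_cons, opL_cons]
    by_cases hij : i = j
    · subst hij
      have h1 : opL A l (β + Pi.single i 1) f = opL A l β f := by
        apply opL_congr
        intro k hk
        have : k ≠ i := fun e => hl.1 (e ▸ hk)
        simp [this]
      rw [h1, ← opL_intertw (A := A) (B := A) (S := A i) h (fun k f hf => hc i k f hf) l β f hf]
      simp
    · have : i ∈ l := by
        rcases List.mem_cons.1 hi with h | h
        · exact absurd h hij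
        · exact h
      rw [ih hl.2 this]
      have : j ≠ i := fun e => hij e.symm
      simp [this]

end absops

section dirs
variable {V : Type*} [NormedAddCommGroup V] [NormedSpace ℝ V]

noncomputable def DD (v : V) (f : V → ℂ) : V → ℂ := fun p => fderiv ℝ f p v

theorem DD_smooth (v : V) (f : V → ℂ) (hf : ContDiff ℝ (⊤ : ℕ∞) f) :
    ContDiff ℝ (⊤ : ℕ∞) (DD v f) := by
  unfold DD
  exact (hf.fderiv_right (m := (⊤ : ℕ∞)) (by simp)).clm_apply contDiff_const

theorem DD_comm (v w : V) (f : V → ℂ) (hf : ContDiff ℝ (⊤ : ℕ∞) f) :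
    DD v (DD w f) = DD w (DD v f) := by
  have hd : Differentiable ℝ (fderiv ℝ f) :=
    (hf.fderiv_right (m := (⊤ : ℕ∞)) (by simp)).differentiable (by simp)
  have key : ∀ a b : V, ∀ p, DD a (DD b f) p = fderiv ℝ (fderiv ℝ f) p a b := by
    intro a b p
    have h1 : HasFDerivAt (fun q => fderiv ℝ f q b)
        ((fderiv ℝ (fderiv ℝ f) p).flip b) p := by
      have := (hd p).hasFDerivAt.clm_apply (hasFDerivAt_const b p)
      simpa using this
    change fderiv ℝ (fun q => fderiv ℝ f q b) p a = _
    rw [h1.fderiv]; rfl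
  funext p
  rw [key, key]
  have : IsSymmSndFDerivAt ℝ f p :=
    (contDiff_infty.1 hf 2).contDiffAt.isSymmSndFDerivAt (by simp)
  exact this v w
end dirs

section mollify
variable {n : ℕ}

abbrev En (n : ℕ) := Fin n → ℝ
abbrev Vn (n : ℕ) := (Fin n → ℝ) × (Fin n → ℝ)

noncomputable def Ax (i : Fin n) : (Vn n → ℂ) → (Vn n → ℂ) := DD ((Pi.single i 1, 0) : Vn n)
noncomputable def Ak (i : Fin n) : (Vn n → ℂ) → (Vn n → ℂ) := DD ((0, Pi.single i 1) : Vn n)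

noncomputable def MX (β α : Fin n → ℕ) (f : Vn n → ℂ) : Vn n → ℂ :=
  opL Ax (List.finRange n) β (opL Ak (List.finRange n) α f)

abbrev Sm (f : Vn n → ℂ) : Prop := ContDiff ℝ (⊤ : ℕ∞) f

theorem md_eq (β : Fin n → ℕ) (F : En n → ℂ) : md β F = opL pd (List.finRange n) β F := rfl

theorem slice_x (ξ : En n) (i : Fin n) (f : Vn n → ℂ) (hf : Sm f) :
    (fun x => Ax i f (x, ξ)) = pd i (fun x => f (x, ξ)) := by
  funext x
  have h : HasFDerivAt (fun x : En n => (x, ξ)) ((ContinuousLinearMap.id ℝ (En n)).prod 0) x :=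
    (hasFDerivAt_id x).prodMk (hasFDerivAt_const ξ x)
  have h2 := ((hf.differentiable (by simp)) (x, ξ)).hasFDerivAt.comp x h
  have h3 : fderiv ℝ (fun x => f (x, ξ)) x = _ := h2.fderiv
  simp [pd, Ax, DD, h3]

theorem slice_k (x : En n) (i : Fin n) (f : Vn n → ℂ) (hf : Sm f) :
    (fun ξ => Ak i f (x, ξ)) = pd i (fun ξ => f (x, ξ)) := by
  funext ξ
  have h : HasFDerivAt (fun ξ : En n => (x, ξ))
      ((0 : En n →L[ℝ] En n).prod (ContinuousLinearMap.id ℝ (En n))) ξ :=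
    (hasFDerivAt_const x ξ).prodMk (hasFDerivAt_id ξ)
  have h2 := ((hf.differentiable (by simp)) (x, ξ)).hasFDerivAt.comp ξ h
  have h3 : fderiv ℝ (fun ξ => f (x, ξ)) ξ = _ := h2.fderiv
  simp [pd, Ak, DD, h3]

theorem mixedD_eq (β α : Fin n → ℕ) (σ : En n → En n → ℂ)
    (hf : Sm (fun p : Vn n => σ p.1 p.2)) (x ξ : En n) :
    mixedD β α σ x ξ = MX β α (fun p : Vn n => σ p.1 p.2) (x, ξ) := by
  have h1 : ∀ x', md α (fun ξ' => σ x' ξ') ξ =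
      opL Ak (List.finRange n) α (fun p : Vn n => σ p.1 p.2) (x', ξ) := by
    intro x'
    have := opL_intertw (A := Ak) (B := pd) (P := Sm) (S := fun f ξ => f (x', ξ))
      (fun i f hf => DD_smooth _ f hf) (fun i f hf => slice_k x' i f hf) (List.finRange n) α _ hf
    rw [md_eq]
    exact (congrFun this ξ).symm
  have h2 : Sm (opL Ak (List.finRange n) α (fun p : Vn n => σ p.1 p.2)) :=
    opL_pres (fun i f hf => DD_smooth _ f hf) _ _ _ hf
  unfold mixedD MX
  simp only [h1]
  have := opL_intertw (A := Ax) (B := pd) (P := Sm) (S := fun f x => f (x, ξ))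
      (fun i f hf => DD_smooth _ f hf) (fun i f hf => slice_x ξ i f hf) (List.finRange n) β _ h2
  rw [md_eq]
  exact (congrFun this x).symm

theorem MX_pres {P : (Vn n → ℂ) → Prop} (hx : ∀ i f, P f → P (Ax i f))
    (hk : ∀ i f, P f → P (Ak i f)) (β α : Fin n → ℕ) (f : Vn n → ℂ) (hf : P f) :
    P (MX β α f) := opL_pres hx _ _ _ (opL_pres hk _ _ _ hf)

theorem MX_intertw {P : (Vn n → ℂ) → Prop} {S : (Vn n → ℂ) → (Vn n → ℂ)}
    (hx : ∀ i f, P f → P (Ax i f)) (hk : ∀ i f, P f → P (Ak i f))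
    (hSx : ∀ i f, P f → S (Ax i f) = Ax i (S f))
    (hSk : ∀ i f, P f → S (Ak i f) = Ak i (S f))
    (β α : Fin n → ℕ) (f : Vn n → ℂ) (hf : P f) :
    S (MX β α f) = MX β α (S f) := by
  unfold MX
  rw [opL_intertw hx hSx _ _ _ (opL_pres hk _ _ _ hf), opL_intertw hk hSk _ _ _ hf]

theorem Ax_sm (i : Fin n) (f : Vn n → ℂ) (hf : Sm f) : Sm (Ax i f) := DD_smooth _ f hf
theorem Ak_sm (i : Fin n) (f : Vn n → ℂ) (hf : Sm f) : Sm (Ak i f) := DD_smooth _ f hf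

theorem MX_Ak (β α : Fin n → ℕ) (i : Fin n) (f : Vn n → ℂ) (hf : Sm f) :
    MX β α (Ak i f) = MX β (α + Pi.single i 1) f := by
  unfold MX
  rw [opL_succ (P := Sm) Ak_sm (fun i j f hf => DD_comm _ _ f hf) _ (List.nodup_finRange n) i
    (List.mem_finRange i) α f hf]

theorem Ax_MX (β α : Fin n → ℕ) (i : Fin n) (f : Vn n → ℂ) (hf : Sm f) :
    Ax i (MX β α f) = MX β α (Ax i f) :=
  MX_intertw (P := Sm) Ax_sm Ak_sm (fun _ f hf => DD_comm _ _ f hf)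
    (fun _ f hf => DD_comm _ _ f hf) β α f hf

theorem MX_Ax (β α : Fin n → ℕ) (i : Fin n) (f : Vn n → ℂ) (hf : Sm f) :
    MX β α (Ax i f) = MX (β + Pi.single i 1) α f := by
  unfold MX
  rw [opL_succ (P := Sm) Ax_sm (fun i j f hf => DD_comm _ _ f hf) _ (List.nodup_finRange n) i
    (List.mem_finRange i) β _ (opL_pres Ak_sm _ _ _ hf)]
  rw [opL_intertw (A := Ak) (B := Ak) (P := Sm) (S := Ax i) Ak_sm
    (fun _ f hf => DD_comm _ _ f hf) _ _ _ hf]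

/-- smooth with all derivatives bounded, locally uniformly in the second variable -/
def Good (f : Vn n → ℂ) : Prop :=
  Sm f ∧ ∀ β α : Fin n → ℕ, ∀ R : ℝ, ∃ C : ℝ, ∀ x ξ : En n, ‖ξ‖ ≤ R → ‖MX β α f (x, ξ)‖ ≤ C

theorem Good.ax (i : Fin n) (f : Vn n → ℂ) (hf : Good f) : Good (Ax i f) :=
  ⟨Ax_sm i f hf.1, fun β α R => by rw [MX_Ax _ _ _ _ hf.1]; exact hf.2 _ _ R⟩
theorem Good.ak (i : Fin n) (f : Vn n → ℂ) (hf : Good f) : Good (Ak i f) :=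
  ⟨Ak_sm i f hf.1, fun β α R => by rw [MX_Ak _ _ _ _ hf.1]; exact hf.2 _ _ R⟩

theorem MX_zero (f : Vn n → ℂ) : MX 0 0 f = f := by
  have : ∀ (A : Fin n → (Vn n → ℂ) → (Vn n → ℂ)) (l : List (Fin n)) f, opL A l 0 f = f := by
    intro A l f
    induction l with
    | nil => rfl
    | cons j l ih => rw [opL_cons, ih]; rfl
  unfold MX
  rw [this, this]

theorem Good.bdd (f : Vn n → ℂ) (hf : Good f) (R : ℝ) :
    ∃ C : ℝ, 0 ≤ C ∧ ∀ p : Vn n, ‖p.2‖ ≤ R → ‖f p‖ ≤ C := by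
  obtain ⟨C, hC⟩ := hf.2 0 0 R
  rw [MX_zero] at hC
  exact ⟨|C|, abs_nonneg _, fun p hp => (hC p.1 p.2 hp).trans (le_abs_self C)⟩

theorem vec_decomp (v : Vn n) :
    v = ∑ i, (v.1 i • ((Pi.single i 1, 0) : Vn n) + v.2 i • ((0, Pi.single i 1) : Vn n)) := by
  ext j <;> simp [Prod.fst_sum, Prod.snd_sum, Finset.sum_apply, Pi.single_apply]

theorem clm_decomp (L : Vn n →L[ℝ] ℂ) (v : Vn n) :
    L v = ∑ i, (v.1 i • L (Pi.single i 1, 0) + v.2 i • L (0, Pi.single i 1)) := by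
  conv_lhs => rw [vec_decomp v]
  simp only [map_sum, map_add, map_smul]

theorem Good.fbdd (f : Vn n → ℂ) (hf : Good f) (R : ℝ) :
    ∃ C : ℝ, 0 ≤ C ∧ ∀ p : Vn n, ‖p.2‖ ≤ R → ‖fderiv ℝ f p‖ ≤ C := by
  have h1 := fun i => (hf.ax i).bdd _ R
  have h2 := fun i => (hf.ak i).bdd _ R
  choose C1 hC1 hb1 using h1
  choose C2 hC2 hb2 using h2
  have h0 : 0 ≤ ∑ i, (C1 i + C2 i) := Finset.sum_nonneg fun i _ => add_nonneg (hC1 i) (hC2 i)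
  refine ⟨_, h0, fun p hp => ?_⟩
  refine ContinuousLinearMap.opNorm_le_bound _ h0 fun v => ?_
  rw [clm_decomp, Finset.sum_mul]
  refine (norm_sum_le _ _).trans (Finset.sum_le_sum fun i _ => ?_)
  refine (norm_add_le _ _).trans ?_
  rw [norm_smul, norm_smul, add_mul]
  have a1 : ‖v.1 i‖ ≤ ‖v‖ := (norm_le_pi_norm v.1 i).trans (norm_fst_le v)
  have a2 : ‖v.2 i‖ ≤ ‖v‖ := (norm_le_pi_norm v.2 i).trans (norm_snd_le v)
  have b1 := hb1 i p hp
  have b2 := hb2 i p hp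
  rw [mul_comm (C1 i), mul_comm (C2 i)]
  exact add_le_add (mul_le_mul a1 b1 (norm_nonneg _) (norm_nonneg _))
    (mul_le_mul a2 b2 (norm_nonneg _) (norm_nonneg _))

/-- convolution in the first variable -/
noncomputable def TT (φ : SchwartzMap (En n) ℂ) (f : Vn n → ℂ) : Vn n → ℂ :=
  fun p => ∫ z, φ z * f (p.1 - z, p.2)

theorem Good.integrable (φ : SchwartzMap (En n) ℂ) (f : Vn n → ℂ) (hf : Good f) (p : Vn n) :
    Integrable (fun z => φ z * f (p.1 - z, p.2)) := by
  obtain ⟨C, hC0, hC⟩ := hf.bdd _ ‖p.2‖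
  have hc : Continuous f := hf.1.continuous
  refine (φ.integrable (μ := volume)).mul_bdd (c := C) ?_ ?_
  · exact (by fun_prop : Continuous fun z => f (p.1 - z, p.2)).aestronglyMeasurable
  · exact Filter.Eventually.of_forall fun z => hC _ le_rfl

set_option maxHeartbeats 1000000 in
theorem TT_fderiv (φ : SchwartzMap (En n) ℂ) (f : Vn n → ℂ) (hf : Good f) (p : Vn n) :
    Integrable (fun z => φ z • fderiv ℝ f (p.1 - z, p.2)) ∧
    HasFDerivAt (TT φ f) (∫ z, φ z • fderiv ℝ f (p.1 - z, p.2)) p := by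
  obtain ⟨C, hC0, hC⟩ := hf.fbdd _ (‖p.2‖ + 1)
  have hc : Continuous f := hf.1.continuous
  have hd : Continuous (fderiv ℝ f) := hf.1.continuous_fderiv (by simp)
  have hφ : Continuous φ := φ.continuous
  have hm : AEStronglyMeasurable (fun z => φ z • fderiv ℝ f (p.1 - z, p.2)) volume :=
    (by fun_prop : Continuous fun z => φ z • fderiv ℝ f (p.1 - z, p.2)).aestronglyMeasurable
  have hbi : Integrable (fun z => ‖φ z‖ * C) volume := (φ.integrable (μ := volume)).norm.mul_const C
  have hbd : ∀ z : En n, ∀ q ∈ Metric.ball p 1, ‖φ z • fderiv ℝ f (q.1 - z, q.2)‖ ≤ ‖φ z‖ * C := by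
    intro z q hq
    rw [norm_smul]
    refine mul_le_mul_of_nonneg_left (hC _ ?_) (norm_nonneg _)
    have h1 : ‖q.2 - p.2‖ ≤ ‖q - p‖ := norm_snd_le (q - p)
    have h2 : ‖q - p‖ < 1 := by simpa [dist_eq_norm] using hq
    have h3 : ‖q.2‖ ≤ ‖p.2‖ + ‖q.2 - p.2‖ := by
      have := norm_add_le p.2 (q.2 - p.2); simpa using this
    simp only
    linarith
  refine ⟨hbi.mono' hm (Filter.Eventually.of_forall fun z =>
    hbd z p (Metric.mem_ball_self one_pos)), ?_⟩
  refine hasFDerivAt_integral_of_dominated_of_fderiv_le (bound := fun z => ‖φ z‖ * C)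
    (F := fun q z => φ z * f (q.1 - z, q.2))
    (F' := fun q z => φ z • fderiv ℝ f (q.1 - z, q.2))
    (Metric.ball_mem_nhds p one_pos) ?_ (hf.integrable φ f p) hm ?_ hbi ?_
  · exact Filter.Eventually.of_forall fun q => (hf.integrable φ f q).aestronglyMeasurable
  · exact Filter.Eventually.of_forall fun z => hbd z
  · refine Filter.Eventually.of_forall fun z q _ => ?_
    have h1 : HasFDerivAt (fun q : Vn n => ((q.1 - z, q.2) : Vn n))
        (ContinuousLinearMap.id ℝ (Vn n)) q := by
      have : (fun q : Vn n => ((q.1 - z, q.2) : Vn n)) = fun q => q - (z, 0) := by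
        funext q; ext <;> simp
      rw [this]
      exact (hasFDerivAt_id q).sub_const _
    have h2 := ((hf.1.differentiable (by simp)) (q.1 - z, q.2)).hasFDerivAt.comp q h1
    simpa using h2.const_mul (φ z)

theorem TT_DD (φ : SchwartzMap (En n) ℂ) (f : Vn n → ℂ) (hf : Good f) (v : Vn n) :
    DD v (TT φ f) = TT φ (DD v f) := by
  funext p
  obtain ⟨h1, h2⟩ := TT_fderiv φ f hf p
  simp only [DD, TT] at *
  rw [h2.fderiv, ContinuousLinearMap.integral_apply h1]
  rfl

theorem TT_contDiff (φ : SchwartzMap (En n) ℂ) (k : ℕ) :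
    ∀ f : Vn n → ℂ, Good f → ContDiff ℝ k (TT φ f) := by
  induction k with
  | zero =>
    intro f hf
    have : Continuous (TT φ f) := by
      have : Differentiable ℝ (TT φ f) := fun p => (TT_fderiv φ f hf p).2.differentiableAt
      exact this.continuous
    exact contDiff_zero.2 this
  | succ k ih =>
    intro f hf
    push_cast
    rw [contDiff_succ_iff_fderiv_apply]
    refine ⟨fun p => (TT_fderiv φ f hf p).2.differentiableAt, by simp, fun v => ?_⟩
    have : (fun p => fderiv ℝ (TT φ f) p v) = fun p =>
        ∑ i, (v.1 i • TT φ (Ax i f) p + v.2 i • TT φ (Ak i f) p) := by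
      funext p
      rw [clm_decomp]
      refine Finset.sum_congr rfl fun i _ => ?_
      have e1 := congrFun (TT_DD φ f hf (Pi.single i 1, 0)) p
      have e2 := congrFun (TT_DD φ f hf (0, Pi.single i 1)) p
      simp only [DD] at e1 e2
      rw [e1, e2]
      rfl
    rw [this]
    refine ContDiff.sum fun i _ => ?_
    exact ((ih _ (hf.ax i)).const_smul _).add ((ih _ (hf.ak i)).const_smul _)

theorem TT_smooth (φ : SchwartzMap (En n) ℂ) (f : Vn n → ℂ) (hf : Good f) : Sm (TT φ f) :=
  contDiff_infty.2 fun k => TT_contDiff φ k f hf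

noncomputable def SS (φ : SchwartzMap (En n) ℂ) (f : Vn n → ℂ) : Vn n → ℂ := fun p => TT φ f p - f p

theorem SS_DD (φ : SchwartzMap (En n) ℂ) (f : Vn n → ℂ) (hf : Good f) (v : Vn n) :
    SS φ (DD v f) = DD v (SS φ f) := by
  funext p
  have h1 := (TT_fderiv φ f hf p).2.differentiableAt
  have h2 : DifferentiableAt ℝ f p := hf.1.differentiable (by simp) p
  have h3 : fderiv ℝ (SS φ f) p = fderiv ℝ (TT φ f) p - fderiv ℝ f p := fderiv_fun_sub h1 h2
  have := congrFun (TT_DD φ f hf v) p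
  simp only [SS, DD] at *
  rw [h3, ← this]
  rfl

theorem SS_MX (φ : SchwartzMap (En n) ℂ) (f : Vn n → ℂ) (hf : Good f) (β α : Fin n → ℕ) :
    SS φ (MX β α f) = MX β α (SS φ f) :=
  MX_intertw (P := Good) (S := SS φ) Good.ax Good.ak (fun _ f hf => SS_DD φ f hf _)
    (fun _ f hf => SS_DD φ f hf _) β α f hf

theorem norm_le_sqrt (y : En n) : ‖y‖ ≤ Real.sqrt (∑ i, y i ^ 2) := by
  refine (pi_norm_le_iff_of_nonneg (Real.sqrt_nonneg _)).2 fun i => ?_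
  refine Real.le_sqrt_of_sq_le ?_
  rw [Real.norm_eq_abs, sq_abs]
  exact Finset.single_le_sum (f := fun i => y i ^ 2) (fun i _ => sq_nonneg _) (Finset.mem_univ i)

theorem sqrt_le_norm (y : En n) : Real.sqrt (∑ i, y i ^ 2) ≤ n * ‖y‖ + ‖y‖ := by
  refine Real.sqrt_le_iff.2 ⟨by positivity, ?_⟩
  have : ∑ i, y i ^ 2 ≤ ∑ _i : Fin n, ‖y‖ ^ 2 := by
    refine Finset.sum_le_sum fun i _ => ?_
    rw [← sq_abs]
    exact pow_le_pow_left₀ (abs_nonneg _) (norm_le_pi_norm y i) 2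
  simp at this
  nlinarith [sq_nonneg ‖y‖, sq_nonneg ((n : ℝ) * ‖y‖), mul_nonneg (Nat.cast_nonneg (α := ℝ) n) (sq_nonneg ‖y‖)]

theorem int_sqrt (φ : SchwartzMap (En n) ℂ) :
    Integrable (fun y => Real.sqrt (∑ i, y i ^ 2) * ‖φ y‖) := by
  have h := (φ.integrable_pow_mul volume 1).const_mul ((n : ℝ) + 1)
  have hφ : Continuous φ := φ.continuous
  refine h.mono' ?_ (Filter.Eventually.of_forall fun y => ?_)
  · exact (by fun_prop : Continuous fun y : En n =>
      Real.sqrt (∑ i, y i ^ 2) * ‖φ y‖).aestronglyMeasurable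
  · rw [Real.norm_of_nonneg (by positivity)]
    have := mul_le_mul_of_nonneg_right (sqrt_le_norm y) (norm_nonneg (φ y))
    simp only [pow_one]
    linarith

theorem main_est (φ : SchwartzMap (En n) ℂ) (hφ : ∫ y, φ y = 1) (h : Vn n → ℂ) (hh : Good h)
    (ξ : En n) (K : ℝ) (hK0 : 0 ≤ K) (hK : ∀ i x, ‖Ax i h (x, ξ)‖ ≤ K) (x : En n) :
    ‖SS φ h (x, ξ)‖ ≤ n * (∫ y, Real.sqrt (∑ i, y i ^ 2) * ‖φ y‖) * K := by
  have hder : ∀ x : En n, DifferentiableAt ℝ (fun x => h (x, ξ)) x := by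
    intro x
    have : Differentiable ℝ h := hh.1.differentiable (by simp)
    fun_prop
  have hb : ∀ x : En n, ‖fderiv ℝ (fun x => h (x, ξ)) x‖ ≤ n * K := by
    intro x
    refine ContinuousLinearMap.opNorm_le_bound _ (by positivity) fun v => ?_
    have hv : v = ∑ i, v i • (Pi.single i 1 : En n) := by
      ext j; simp [Finset.sum_apply, Pi.single_apply]
    conv_lhs => rw [hv]
    rw [map_sum]
    refine (norm_sum_le _ _).trans ?_
    have : ∀ i ∈ Finset.univ, ‖fderiv ℝ (fun x => h (x, ξ)) x (v i • (Pi.single i 1 : En n))‖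
        ≤ K * ‖v‖ := by
      intro i _
      rw [map_smul, norm_smul, mul_comm]
      have e := congrFun (slice_x ξ i h hh.1) x
      have e' := hK i x
      simp only [pd] at e
      rw [e] at e'
      exact mul_le_mul e' (norm_le_pi_norm v i) (norm_nonneg _) hK0
    refine (Finset.sum_le_sum this).trans ?_
    simp [mul_assoc]
  have hlip : ∀ z : En n, ‖h (x - z, ξ) - h (x, ξ)‖ ≤ n * K * ‖z‖ := by
    intro z
    have := convex_univ.norm_image_sub_le_of_norm_fderiv_le (𝕜 := ℝ) (f := fun x => h (x, ξ))
      (fun x _ => hder x) (fun x _ => hb x) (Set.mem_univ x) (Set.mem_univ (x - z))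
    simpa using this
  have hS : SS φ h (x, ξ) = ∫ z, φ z * (h (x - z, ξ) - h (x, ξ)) := by
    have e : (fun z => φ z * (h (x - z, ξ) - h (x, ξ))) =
        fun z => φ z * h (x - z, ξ) - φ z * h (x, ξ) := by funext z; ring
    rw [e, integral_sub (hh.integrable φ h (x, ξ)) ((φ.integrable (μ := volume)).mul_const _),
      integral_mul_const, hφ, one_mul]
    rfl
  rw [hS]
  have e2 : (n : ℝ) * (∫ y, Real.sqrt (∑ i, y i ^ 2) * ‖φ y‖) * K =
      ∫ y, (n * K) * (Real.sqrt (∑ i, y i ^ 2) * ‖φ y‖) := by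
    rw [integral_const_mul]; ring
  rw [e2]
  refine norm_integral_le_of_norm_le ((int_sqrt φ).const_mul _)
    (Filter.Eventually.of_forall fun z => ?_)
  rw [norm_mul]
  have h1 : (n : ℝ) * K * ‖z‖ ≤ n * K * Real.sqrt (∑ i, z i ^ 2) :=
    mul_le_mul_of_nonneg_left (norm_le_sqrt z) (by positivity)
  calc ‖φ z‖ * ‖h (x - z, ξ) - h (x, ξ)‖ ≤ ‖φ z‖ * (n * K * Real.sqrt (∑ i, z i ^ 2)) :=
        mul_le_mul_of_nonneg_left ((hlip z).trans h1) (norm_nonneg _)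
    _ = _ := by ring

theorem wt_pos (ξ : En n) : 0 < wt ξ := by
  unfold wt
  have : 0 ≤ ∑ i, ξ i ^ 2 := Finset.sum_nonneg fun i _ => sq_nonneg _
  linarith

theorem SymbolClass.good {m ρ δ : ℝ} {σ : En n → En n → ℂ} (h : SymbolClass m ρ δ σ) :
    Good (fun p : Vn n => σ p.1 p.2) := by
  refine ⟨h.1, fun β α R => ?_⟩
  obtain ⟨C, hC, hb⟩ := h.2 α β
  have hcont : Continuous fun ξ : En n => wt ξ ^ ((m - ρ * mOrd α + δ * mOrd β) / 2) := by
    refine Continuous.rpow_const ?_ fun ξ => Or.inl (wt_pos ξ).ne'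
    unfold wt; fun_prop
  obtain ⟨B, hB⟩ := (isCompact_closedBall (0 : En n) R).bddAbove_image hcont.continuousOn
  refine ⟨C * B, fun x ξ hξ => ?_⟩
  rw [← mixedD_eq β α σ h.1]
  refine (hb x ξ).trans (mul_le_mul_of_nonneg_left ?_ hC.le)
  exact hB ⟨ξ, by simpa using hξ, rfl⟩

theorem mOrd_succ (β : Fin n → ℕ) (i : Fin n) : mOrd (β + Pi.single i 1) = mOrd β + 1 := by
  simp [mOrd, Finset.sum_add_distrib, Pi.single_apply]

theorem sum_succ' (β : Fin n → ℕ) (i : Fin n) :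
    ∑ j, (β + Pi.single i 1 : Fin n → ℕ) j = (∑ j, β j) + 1 := by
  simp [Finset.sum_add_distrib, Pi.single_apply]

theorem mixed_bound {m ρ δ : ℝ} {σ : En n → En n → ℂ} (h : SymbolClass m ρ δ σ)
    (φ : SchwartzMap (En n) ℂ) (hφ : ∫ y, φ y = 1) (β α : Fin n → ℕ) (ξ : En n) (K : ℝ)
    (hK0 : 0 ≤ K) (hK : ∀ i x, ‖mixedD (β + Pi.single i 1) α σ x ξ‖ ≤ K) (x : En n) :
    ‖mixedD β α (fun x' ξ' => (∫ z, φ z * σ (x' - z) ξ') - σ x' ξ') x ξ‖ ≤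
      n * (∫ y, Real.sqrt (∑ i, y i ^ 2) * ‖φ y‖) * K := by
  have hg := h.good
  have hs : Sm (SS φ (fun p : Vn n => σ p.1 p.2)) := (TT_smooth φ _ hg).sub h.1
  rw [mixedD_eq β α _ hs]
  have e := SS_MX φ _ hg β α
  change ‖MX β α (SS φ (fun p : Vn n => σ p.1 p.2)) (x, ξ)‖ ≤ _
  rw [← e]
  refine main_est φ hφ _ (MX_pres Good.ax Good.ak β α _ hg) ξ K hK0 (fun i x => ?_) x
  rw [Ax_MX _ _ _ _ h.1, MX_Ax _ _ _ _ h.1, ← mixedD_eq _ _ σ h.1]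
  exact hK i x

end mollify

/-- Taylor-type estimate for `σ∗φ − σ` when `∫ φ = 1`, with a
constant depending only on `n` and `β`; in particular `σ∗φ − σ ∈ S^{m+δ}_{ρ,δ}`. -/
theorem symbol_mollification_estimate (n : ℕ) (hn : 1 ≤ n) (β : Fin n → ℕ) :
    ∃ C > 0, ∀ (m ρ δ : ℝ), ρ ≤ 1 → δ ≤ ρ → 0 ≤ δ →
      ∀ (α : Fin n → ℕ) (σ : (Fin n → ℝ) → (Fin n → ℝ) → ℂ)
        (φ : SchwartzMap (Fin n → ℝ) ℂ),
      SymbolClass m ρ δ σ → (∫ y, φ y) = 1 →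
      SymbolClass (m + δ) ρ δ (fun x ξ => (∫ z, φ z * σ (x - z) ξ) - σ x ξ) ∧
      ∀ M : ℝ, (∀ β' : Fin n → ℕ, (∑ i, β' i) = (∑ i, β i) + 1 →
          hSem m ρ δ α β' σ ≤ M) →
        ∀ x ξ, wt ξ ^ (-(m + δ - ρ * mOrd α + δ * mOrd β) / 2)
            * ‖mixedD β α (fun x' ξ' => (∫ z, φ z * σ (x' - z) ξ') - σ x' ξ') x ξ‖
          ≤ C * (∫ y, Real.sqrt (∑ i, y i ^ 2) * ‖φ y‖) * M := by
  refine ⟨n, by exact_mod_cast hn, ?_⟩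
  intro m ρ δ _ _ _ α σ φ hσ hφ
  have hI : 0 ≤ ∫ y, Real.sqrt (∑ i, y i ^ 2) * ‖φ y‖ :=
    integral_nonneg fun y => mul_nonneg (Real.sqrt_nonneg _) (norm_nonneg _)
  refine ⟨⟨(TT_smooth φ _ hσ.good).sub hσ.1, fun α β => ?_⟩, fun M hM x ξ => ?_⟩
  · have h1 := fun i : Fin n => hσ.2 α (β + Pi.single i 1)
    choose C hC hb using h1
    have hS : 0 ≤ ∑ i, C i := Finset.sum_nonneg fun i _ => (hC i).le
    refine ⟨n * (∫ y, Real.sqrt (∑ i, y i ^ 2) * ‖φ y‖) * (∑ i, C i) + 1, by positivity,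
      fun x ξ => ?_⟩
    have hw : 0 < wt ξ ^ ((m + δ - ρ * mOrd α + δ * mOrd β) / 2) :=
      Real.rpow_pos_of_pos (wt_pos ξ) _
    have := mixed_bound hσ φ hφ β α ξ
      ((∑ i, C i) * wt ξ ^ ((m + δ - ρ * mOrd α + δ * mOrd β) / 2)) (by positivity) (fun i x => ?_) x
    · refine this.trans ?_
      rw [add_mul, ← mul_assoc, one_mul]
      linarith
    · have e := hb i x ξ
      rw [mOrd_succ, show (m - ρ * mOrd α + δ * (mOrd β + 1)) / 2 =
        (m + δ - ρ * mOrd α + δ * mOrd β) / 2 by ring] at e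
      exact e.trans (mul_le_mul_of_nonneg_right
        (Finset.single_le_sum (fun i _ => (hC i).le) (Finset.mem_univ i)) hw.le)
  · have hw : 0 < wt ξ ^ ((m + δ - ρ * mOrd α + δ * mOrd β) / 2) :=
      Real.rpow_pos_of_pos (wt_pos ξ) _
    have hneg : ∀ s : ℝ, ∀ ξ : Fin n → ℝ, wt ξ ^ (-s / 2) = (wt ξ ^ (s / 2))⁻¹ := by
      intro s ξ
      rw [neg_div, Real.rpow_neg (wt_pos ξ).le]
    have key : ∀ i x, ‖mixedD (β + Pi.single i 1) α σ x ξ‖ ≤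
        M * wt ξ ^ ((m + δ - ρ * mOrd α + δ * mOrd β) / 2) := by
      intro i x
      have h1 := hM _ (sum_succ' β i)
      obtain ⟨C, hC, hb⟩ := hσ.2 α (β + Pi.single i 1)
      have hbd : BddAbove (Set.range fun p : (Fin n → ℝ) × (Fin n → ℝ) =>
          wt p.2 ^ (-(m - ρ * mOrd α + δ * mOrd (β + Pi.single i 1)) / 2) *
            ‖mixedD (β + Pi.single i 1) α σ p.1 p.2‖) := by
        refine ⟨C, ?_⟩
        rintro _ ⟨p, rfl⟩
        simp only
        rw [hneg, inv_mul_le_iff₀ (Real.rpow_pos_of_pos (wt_pos _) _), mul_comm]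
        exact hb p.1 p.2
      have h2 := (le_ciSup hbd (x, ξ)).trans h1
      simp only at h2
      rw [mOrd_succ, show m - ρ * mOrd α + δ * (mOrd β + 1) =
        m + δ - ρ * mOrd α + δ * mOrd β by ring, hneg, inv_mul_le_iff₀ hw, mul_comm] at h2
      exact h2
    have hM0 : 0 ≤ M * wt ξ ^ ((m + δ - ρ * mOrd α + δ * mOrd β) / 2) :=
      (norm_nonneg _).trans (key ⟨0, hn⟩ x)
    have := mixed_bound hσ φ hφ β α ξ _ hM0 key x
    rw [hneg, inv_mul_le_iff₀ hw]
    refine this.trans (le_of_eq ?_)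
    ring
end

section
/- Let n ≥ 1, m ≤ 0, 1 ≥ ρ ≥ δ ≥ 0 with δ < 1, and let a ∈ 𝒮(ℝⁿ) with ‖a‖_{L²(ℝⁿ)} = 1. For every σ ∈ S^m_{ρ,δ}(ℝⁿ) there exists τ ∈ S^m_{ρ,δ}(ℝⁿ) such that for all f ∈ 𝒮(ℝⁿ) and x ∈ ℝⁿ, Op^{Wick,a}(σ)f(x) = ∫_{ℝⁿ} e^{2πi x·ξ} τ(x,ξ) 𝓕f(ξ) dξ; that is, the Wick quantization of a symbol of order m ≤ 0 is a Kohn–Nirenberg pseudodifferential operator of order m. (Euclidean analogue of Lemma 3.5(1)/Lemma 5.4(1).) -/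
open MeasureTheory Complex

namespace WK

abbrev E (n : ℕ) := Fin n → ℝ
abbrev P (n : ℕ) := (Fin n → ℝ) × (Fin n → ℝ)

/-- Basis of the phase space. -/
noncomputable def bas {n : ℕ} : Fin n ⊕ Fin n → P n
  | Sum.inl i => (Pi.single i 1, 0)
  | Sum.inr i => (0, Pi.single i 1)

/-- Coordinates. -/
noncomputable def crd {n : ℕ} : Fin n ⊕ Fin n → (P n →L[ℝ] ℝ)
  | Sum.inl i => (ContinuousLinearMap.proj i).comp (ContinuousLinearMap.fst ℝ _ _)
  | Sum.inr i => (ContinuousLinearMap.proj i).comp (ContinuousLinearMap.snd ℝ _ _)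

lemma bas_sum {n : ℕ} (v : P n) : ∑ i, crd i v • bas i = v := by
  rw [Fintype.sum_sum_type]
  ext j
  · simp [bas, crd, Prod.fst_sum, Finset.sum_apply, Pi.single_apply]
  · simp [bas, crd, Prod.snd_sum, Finset.sum_apply, Pi.single_apply]

lemma crd_norm {n : ℕ} (i : Fin n ⊕ Fin n) (v : P n) : ‖crd i v‖ ≤ ‖v‖ := by
  rcases i with i | i
  · exact (norm_le_pi_norm v.1 i).trans (norm_fst_le v)
  · exact (norm_le_pi_norm v.2 i).trans (norm_snd_le v)

lemma clm_eq_sum {n : ℕ} (L : P n →L[ℝ] ℂ) : L = ∑ i, (crd i).smulRight (L (bas i)) := by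
  apply ContinuousLinearMap.ext
  intro v
  conv_lhs => rw [← bas_sum v, map_sum]
  simp

lemma clm_norm_le {n : ℕ} (L : P n →L[ℝ] ℂ) : ‖L‖ ≤ ∑ i, ‖L (bas i)‖ := by
  refine L.opNorm_le_bound (by positivity) fun v => ?_
  conv_lhs => rw [← bas_sum v, map_sum]
  refine (norm_sum_le _ _).trans ?_
  rw [Finset.sum_mul]
  refine Finset.sum_le_sum fun i _ => ?_
  rw [map_smul, norm_smul, mul_comm]
  gcongr
  exact crd_norm i v

/-- Smooth functions. -/
abbrev Sm (n : ℕ) := {G : P n → ℂ // ContDiff ℝ (⊤ : ℕ∞) G}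

/-- Directional derivative. -/
noncomputable def dd {n : ℕ} (i : Fin n ⊕ Fin n) : Function.End (Sm n) := fun G =>
  ⟨fun p => fderiv ℝ G.1 p (bas i), (G.2.fderiv_right (m := (⊤ : ℕ∞)) (by simp)).clm_apply
    contDiff_const⟩

lemma dd_comm {n : ℕ} (i j : Fin n ⊕ Fin n) : Commute (dd i) (dd j) := by
  funext G
  apply Subtype.ext
  funext p
  have h : ∀ v w : P n, fderiv ℝ (fun q => fderiv ℝ G.1 q v) p w
      = fderiv ℝ (fderiv ℝ G.1) p w v := by
    intro v w
    have hd : DifferentiableAt ℝ (fderiv ℝ G.1) p :=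
      ((G.2.fderiv_right (m := (⊤ : ℕ∞)) (by simp)).differentiable (by simp)) p
    rw [fderiv_clm_apply hd (differentiableAt_const v)]
    simp
  change fderiv ℝ (fun q => fderiv ℝ G.1 q (bas j)) p (bas i) =
    fderiv ℝ (fun q => fderiv ℝ G.1 q (bas i)) p (bas j)
  rw [h, h]
  have := (G.2.contDiffAt (x := p)).isSymmSndFDerivAt
    (by simp only [minSmoothness_of_isRCLikeNormedField]; exact WithTop.coe_le_coe.2 (le_top : (2 : ℕ∞) ≤ ⊤))
  exact this (bas i) (bas j)

lemma exists_family {n : ℕ} (G : Sm n) :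
    ∃ H : (Fin n ⊕ Fin n → ℕ) → Sm n, H 0 = G ∧
      ∀ γ i, dd i (H γ) = H (γ + Pi.single i 1) := by
  let Φ := MonoidHom.noncommPiCoprod (N := fun _ : Fin n ⊕ Fin n => Multiplicative ℕ)
    (fun i => powersHom (Function.End (Sm n)) (dd i))
    (fun i j _ x y => by
      simp only [powersHom_apply]
      exact (dd_comm i j).pow_pow _ _)
  refine ⟨fun γ => Φ (fun i => Multiplicative.ofAdd (γ i)) G, ?_, ?_⟩
  · change Φ 1 G = G
    rw [map_one]; rfl
  · intro γ i
    have h1 : (fun j => Multiplicative.ofAdd ((γ + Pi.single i 1 : Fin n ⊕ Fin n → ℕ) j)) =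
        Pi.mulSingle (M := fun _ : Fin n ⊕ Fin n => Multiplicative ℕ) i (Multiplicative.ofAdd 1)
          * (fun j => Multiplicative.ofAdd (γ j)) := by
      funext j
      by_cases hj : j = i
      · subst hj; simp [mul_comm]
      · simp [hj]
    change _ = Φ _ G
    rw [h1, map_mul]
    change _ = Φ (Pi.mulSingle i (Multiplicative.ofAdd 1)) (Φ _ G)
    have h2 : Φ (Pi.mulSingle i (Multiplicative.ofAdd 1)) = dd i := by
      exact (MonoidHom.noncommPiCoprod_mulSingle _ i _).trans (by simp)
    rw [h2]

lemma md_family {n : ℕ} (H : (Fin n → ℕ) → E n → ℂ)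
    (hH : ∀ α i, pd i (H α) = H (α + Pi.single i 1)) (α : Fin n → ℕ) : md α (H 0) = H α := by
  have key : ∀ l : List (Fin n), (((l.map fun i => (pd i)^[α i]).foldr (· ∘ ·) id) (H 0)) =
      H ((l.map fun i => Pi.single i (α i)).sum) := by
    intro l
    induction l with
    | nil => simp
    | cons i l ih =>
      simp only [List.map_cons, List.foldr_cons, Function.comp_apply, List.sum_cons]
      rw [ih]
      generalize (l.map fun i => Pi.single i (α i)).sum = γ
      have : ∀ k : ℕ, (pd i)^[k] (H γ) = H (Pi.single i k + γ) := by
        intro k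
        induction k with
        | zero => simp
        | succ k ihk =>
          rw [Function.iterate_succ_apply', ihk, hH]
          congr 1
          rw [Pi.single_add]; abel
      exact this _
  rw [md, key]
  congr 1
  rw [← List.sum_toFinset _ (List.nodup_finRange n)]
  funext j
  simp [Finset.sum_apply, Pi.single_apply]

lemma pd_fst {n : ℕ} {G : P n → ℂ} (hG : Differentiable ℝ G) (ξ : E n) (i : Fin n) :
    pd i (fun x => G (x, ξ)) = fun x => fderiv ℝ G (x, ξ) (bas (Sum.inl i)) := by
  funext x
  have h1 : HasFDerivAt (fun x : E n => (x, ξ)) (ContinuousLinearMap.inl ℝ (E n) (E n)) x :=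
    hasFDerivAt_prodMk_left x ξ
  have := ((hG (x, ξ)).hasFDerivAt.comp x h1).fderiv
  simp only [pd]
  change fderiv ℝ (G ∘ fun x => (x, ξ)) x _ = _
  rw [this]; simp [bas]

lemma pd_snd {n : ℕ} {G : P n → ℂ} (hG : Differentiable ℝ G) (x : E n) (i : Fin n) :
    pd i (fun ξ => G (x, ξ)) = fun ξ => fderiv ℝ G (x, ξ) (bas (Sum.inr i)) := by
  funext ξ
  have h1 : HasFDerivAt (fun ξ : E n => (x, ξ)) (ContinuousLinearMap.inr ℝ (E n) (E n)) ξ :=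
    hasFDerivAt_prodMk_right x ξ
  have := ((hG (x, ξ)).hasFDerivAt.comp ξ h1).fderiv
  simp only [pd]
  change fderiv ℝ (G ∘ fun ξ => (x, ξ)) ξ _ = _
  rw [this]; simp [bas]

lemma mixed_family {n : ℕ} (H : (Fin n ⊕ Fin n → ℕ) → P n → ℂ)
    (hd : ∀ γ, Differentiable ℝ (H γ))
    (hH : ∀ γ i p, fderiv ℝ (H γ) p (bas i) = H (γ + Pi.single i 1) p)
    (β α : Fin n → ℕ) (x ξ : E n) :
    mixedD β α (fun x ξ => H 0 (x, ξ)) x ξ = H (Sum.elim β α) (x, ξ) := by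
  have e1 : ∀ (β α : Fin n → ℕ) i, Sum.elim β α + Pi.single (Sum.inl i) 1 =
      Sum.elim (β + Pi.single i 1) α := by
    intro β α i
    funext j; rcases j with j | j <;> simp [Pi.single_apply]
  have e2 : ∀ (β α : Fin n → ℕ) i, Sum.elim β α + Pi.single (Sum.inr i) 1 =
      Sum.elim β (α + Pi.single i 1) := by
    intro β α i
    funext j; rcases j with j | j <;> simp [Pi.single_apply]
  have e0 : (0 : Fin n ⊕ Fin n → ℕ) = Sum.elim (0 : Fin n → ℕ) (0 : Fin n → ℕ) := by
    funext j; rcases j with j | j <;> simp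
  have hy : ∀ x' : E n, md α (fun ξ' => H 0 (x', ξ')) = fun ξ' => H (Sum.elim 0 α) (x', ξ') := by
    intro x'
    rw [e0]
    refine md_family (fun α ξ' => H (Sum.elim 0 α) (x', ξ')) ?_ α
    intro α i
    rw [pd_snd (hd _)]
    funext ξ'
    rw [hH, e2]
  simp only [mixedD, hy]
  have := md_family (fun β x' => H (Sum.elim β α) (x', ξ)) ?_ β
  · exact congrFun this x
  intro β i
  rw [pd_fst (hd _)]
  funext x'
  rw [hH, e1]


lemma one_le_wt {n : ℕ} (ξ : E n) : 1 ≤ wt ξ := by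
  have : 0 ≤ ∑ i, ξ i ^ 2 := Finset.sum_nonneg fun i _ => sq_nonneg _
  simp only [wt]; linarith

lemma wt_pos {n : ℕ} (ξ : E n) : 0 < wt ξ := lt_of_lt_of_le one_pos (one_le_wt ξ)

lemma wt_cont {n : ℕ} : Continuous (wt : E n → ℝ) := by
  unfold wt; fun_prop

lemma wt_neg {n : ℕ} (ξ : E n) : wt (-ξ) = wt ξ := by simp [wt]

lemma wt_add_le {n : ℕ} (ξ η : E n) : wt (ξ + η) ≤ 2 * wt ξ * wt η := by
  have h : ∑ i, (ξ + η) i ^ 2 ≤ 2 * ∑ i, ξ i ^ 2 + 2 * ∑ i, η i ^ 2 := by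
    rw [Finset.mul_sum, Finset.mul_sum, ← Finset.sum_add_distrib]
    refine Finset.sum_le_sum fun i _ => ?_
    simp only [Pi.add_apply]
    nlinarith [sq_nonneg (ξ i - η i)]
  have h1 : 0 ≤ ∑ i, ξ i ^ 2 := Finset.sum_nonneg fun i _ => sq_nonneg _
  have h2 : 0 ≤ ∑ i, η i ^ 2 := Finset.sum_nonneg fun i _ => sq_nonneg _
  simp only [wt]
  nlinarith [mul_nonneg h1 h2]

lemma peetre {n : ℕ} (s : ℝ) (η ζ : E n) :
    wt (η + ζ) ^ s ≤ 2 ^ |s| * wt η ^ s * wt ζ ^ |s| := by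
  have p1 := wt_pos η
  have p2 := wt_pos ζ
  have p3 := wt_pos (η + ζ)
  rcases le_total 0 s with hs | hs
  · rw [abs_of_nonneg hs, ← Real.mul_rpow (by norm_num) p1.le,
      ← Real.mul_rpow (by positivity) p2.le]
    exact Real.rpow_le_rpow p3.le (wt_add_le η ζ) hs
  · have h : wt η ≤ 2 * wt ζ * wt (η + ζ) := by
      have := wt_add_le (-ζ) (η + ζ)
      rw [wt_neg] at this
      simpa using this
    have h2 : (2 * wt ζ * wt (η + ζ)) ^ s ≤ wt η ^ s := Real.rpow_le_rpow_of_nonpos p1 h hs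
    rw [Real.mul_rpow (by positivity) p3.le] at h2
    have h3 : (2 * wt ζ) ^ (-s) * (2 * wt ζ) ^ s = 1 := by
      rw [← Real.rpow_add (by positivity)]; simp
    rw [abs_of_nonpos hs]
    calc wt (η + ζ) ^ s = (2 * wt ζ) ^ (-s) * ((2 * wt ζ) ^ s * wt (η + ζ) ^ s) := by
          rw [← mul_assoc, h3, one_mul]
      _ ≤ (2 * wt ζ) ^ (-s) * wt η ^ s := by gcongr
      _ = _ := by rw [Real.mul_rpow (by norm_num) p2.le]; ring

/-- Polynomial bounds in the second variable. -/
def PB {n : ℕ} {F : Type} [Norm F] (G : P n → F) : Prop :=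
  ∃ C s : ℝ, 0 ≤ C ∧ 0 ≤ s ∧ ∀ p, ‖G p‖ ≤ C * wt p.2 ^ s

lemma PB_of {n : ℕ} {F : Type} [Norm F] {G : P n → F} (C s : ℝ) (hC : 0 ≤ C)
    (h : ∀ p, ‖G p‖ ≤ C * wt p.2 ^ s) : PB G := by
  refine ⟨C, |s|, hC, abs_nonneg _, fun p => (h p).trans ?_⟩
  gcongr
  · exact one_le_wt _
  · exact le_abs_self s

lemma PB_fderiv {n : ℕ} {G : P n → ℂ}
    (h : ∀ i, PB fun p => fderiv ℝ G p (bas i)) : PB (fderiv ℝ G) := by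
  choose C s hC hs hb using h
  refine ⟨∑ i, C i, ∑ i, s i, Finset.sum_nonneg fun i _ => hC i,
    Finset.sum_nonneg fun i _ => hs i, fun p => (clm_norm_le _).trans ?_⟩
  rw [Finset.sum_mul]
  refine Finset.sum_le_sum fun i _ => (hb i p).trans ?_
  have := hC i
  gcongr
  · exact one_le_wt _
  · exact Finset.single_le_sum (f := s) (fun j _ => hs j) (Finset.mem_univ i)

/-- The shift. -/
def sh {n : ℕ} (p w : P n) : P n := (p.1 - w.1, p.2 + w.2)

/-- The convolution operator. -/
noncomputable def T {n : ℕ} (k : P n → ℂ) (G : P n → ℂ) (p : P n) : ℂ :=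
  ∫ w, k w * G (sh p w)

/-- Admissible kernels. -/
def Adm {n : ℕ} (k : P n → ℂ) : Prop :=
  Continuous k ∧ ∀ s : ℝ, Integrable fun w : P n => ‖k w‖ * wt w.2 ^ s

lemma T_int {n : ℕ} {k : P n → ℂ} (hk : Adm k) {F : Type} [NormedAddCommGroup F]
    [NormedSpace ℂ F] [SecondCountableTopology F]
    {G : P n → F} (hG : Continuous G) (hb : PB G) (p : P n) :
    Integrable fun w => k w • G (sh p w) := by
  obtain ⟨C, s, hC, hs, hb⟩ := hb
  have hk' := hk.1
  refine Integrable.mono' ((hk.2 |s|).const_mul (C * 2 ^ |s| * wt p.2 ^ s)) ?_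
    (Filter.Eventually.of_forall fun w => ?_)
  · refine Continuous.aestronglyMeasurable ?_
    unfold sh; fun_prop
  · rw [norm_smul]
    have h1 := hb (sh p w)
    have h2 := peetre s p.2 w.2
    calc ‖k w‖ * ‖G (sh p w)‖ ≤ ‖k w‖ * (C * (2 ^ |s| * wt p.2 ^ s * wt w.2 ^ |s|)) := by
          gcongr
          refine h1.trans ?_
          gcongr
          exact h2
      _ = _ := by ring

lemma T_bound {n : ℕ} {k : P n → ℂ} (hk : Adm k) {G : P n → ℂ} {C s : ℝ} (hC : 0 ≤ C)
    (hb : ∀ p, ‖G p‖ ≤ C * wt p.2 ^ s) (p : P n) :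
    ‖T k G p‖ ≤ (C * 2 ^ |s| * ∫ w, ‖k w‖ * wt w.2 ^ |s|) * wt p.2 ^ s := by
  have : ‖T k G p‖ ≤ ∫ w, (C * 2 ^ |s| * wt p.2 ^ s) * (‖k w‖ * wt w.2 ^ |s|) := by
    refine norm_integral_le_of_norm_le ((hk.2 |s|).const_mul _)
      (Filter.Eventually.of_forall fun w => ?_)
    rw [norm_mul]
    have h1 := hb (sh p w)
    have h2 := peetre s p.2 w.2
    calc ‖k w‖ * ‖G (sh p w)‖ ≤ ‖k w‖ * (C * (2 ^ |s| * wt p.2 ^ s * wt w.2 ^ |s|)) := by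
          gcongr
          refine h1.trans ?_
          gcongr
          exact h2
      _ = _ := by ring
  rw [integral_const_mul] at this
  linarith

lemma wt_loc {n : ℕ} (s : ℝ) (hs : 0 ≤ s) (p : P n) :
    ∃ M, 0 ≤ M ∧ ∀ q ∈ Metric.closedBall p 1, ∀ w : P n, wt (sh q w).2 ^ s ≤ M * wt w.2 ^ s := by
  have hc : Continuous fun q : P n => (2 : ℝ) ^ |s| * wt q.2 ^ s := by
    have := (wt_cont (n := n)).comp (continuous_snd : Continuous fun q : P n => q.2)
    refine continuous_const.mul (this.rpow_const fun _ => Or.inr hs)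
  obtain ⟨M, hM⟩ := (isCompact_closedBall p 1).bddAbove_image hc.continuousOn
  have hM' : ∀ q ∈ Metric.closedBall p 1, (2 : ℝ) ^ |s| * wt q.2 ^ s ≤ M := fun q hq =>
    hM (Set.mem_image_of_mem _ hq)
  refine ⟨M, ?_, ?_⟩
  · have := hM' p (by simp)
    have h2 := wt_pos p.2
    exact le_trans (by positivity) this
  · intro q hq w
    have := peetre s q.2 w.2
    refine this.trans ?_
    rw [abs_of_nonneg hs] at *
    have h2 := wt_pos w.2
    gcongr
    exact hM' q hq

lemma T_hasFDerivAt {n : ℕ} {k : P n → ℂ} (hk : Adm k) {G : P n → ℂ}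
    (hG : ContDiff ℝ (⊤ : ℕ∞) G) (hb : PB G) (hb' : PB (fderiv ℝ G)) (p : P n) :
    HasFDerivAt (T k G) (∫ w, k w • fderiv ℝ G (sh p w)) p := by
  have hk' := hk.1
  have hGc := hG.continuous
  have hdc : Continuous (fderiv ℝ G) := hG.continuous_fderiv (by simp)
  obtain ⟨C, s, hC, hs, hbd⟩ := id hb'
  obtain ⟨M, hM, hMb⟩ := wt_loc s hs p
  refine hasFDerivAt_integral_of_dominated_of_fderiv_le (s := Metric.closedBall p 1)
    (bound := fun w => C * M * (‖k w‖ * wt w.2 ^ s)) (F := fun p w => k w * G (sh p w))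
    (F' := fun p w => k w • fderiv ℝ G (sh p w)) (Metric.closedBall_mem_nhds p one_pos)
    ?_ ?_ ?_ ?_ ((hk.2 s).const_mul _) ?_
  · refine Filter.Eventually.of_forall fun q => Continuous.aestronglyMeasurable ?_
    unfold sh; fun_prop
  · exact T_int hk hGc hb p
  · exact (T_int hk hdc hb' p).aestronglyMeasurable
  · refine Filter.Eventually.of_forall fun w q hq => ?_
    rw [norm_smul]
    calc ‖k w‖ * ‖fderiv ℝ G (sh q w)‖ ≤ ‖k w‖ * (C * (M * wt w.2 ^ s)) := by
          gcongr
          refine (hbd _).trans ?_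
          gcongr
          exact hMb q hq w
      _ = _ := by ring
  · refine Filter.Eventually.of_forall fun w q hq => ?_
    have h1 : HasFDerivAt (fun q : P n => sh q w) (ContinuousLinearMap.id ℝ (P n)) q := by
      have : (fun q : P n => sh q w) = fun q => q + (-w.1, w.2) := by
        funext q; simp [sh, sub_eq_add_neg, Prod.ext_iff]
      rw [this]
      exact (hasFDerivAt_id q).add_const _
    have h2 := ((hG.differentiable (by simp)) (sh q w)).hasFDerivAt.comp q h1
    simpa using h2.const_mul (k w)

lemma T_fderiv {n : ℕ} {k : P n → ℂ} (hk : Adm k) {G : P n → ℂ}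
    (hG : ContDiff ℝ (⊤ : ℕ∞) G) (hb : PB G) (hb' : PB (fderiv ℝ G)) (p v : P n) :
    fderiv ℝ (T k G) p v = T k (fun q => fderiv ℝ G q v) p := by
  rw [(T_hasFDerivAt hk hG hb hb' p).fderiv, ContinuousLinearMap.integral_apply]
  · rfl
  · exact T_int hk (hG.continuous_fderiv (by simp)) hb' p

lemma T_symbol {n : ℕ} {k : P n → ℂ} (hk : Adm k) {m ρ δ : ℝ} {σ : E n → E n → ℂ}
    (hσ : SymbolClass m ρ δ σ) :
    SymbolClass m ρ δ (fun x ξ => T k (fun p => σ p.1 p.2) (x, ξ)) := by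
  obtain ⟨H, H0, HH⟩ := exists_family (⟨fun p => σ p.1 p.2, hσ.1⟩ : Sm n)
  have HH' : ∀ γ i p, fderiv ℝ (H γ).1 p (bas i) = (H (γ + Pi.single i 1)).1 p := by
    intro γ i p; rw [← HH]; rfl
  have H0' : (H 0).1 = fun p => σ p.1 p.2 := by rw [H0]
  have hmix : ∀ β α x ξ, mixedD β α σ x ξ = (H (Sum.elim β α)).1 (x, ξ) := by
    intro β α x ξ
    rw [← mixed_family (fun γ => (H γ).1) (fun γ => (H γ).2.differentiable (by simp)) HH']
    simp only [H0']
  have hbd : ∀ α β : Fin n → ℕ, ∃ C > 0, ∀ p : P n,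
      ‖(H (Sum.elim β α)).1 p‖ ≤ C * wt p.2 ^ ((m - ρ * mOrd α + δ * mOrd β) / 2) := by
    intro α β
    obtain ⟨C, hC, h⟩ := hσ.2 α β
    exact ⟨C, hC, fun p => by rw [← hmix]; exact h _ _⟩
  have hPB : ∀ γ, PB (H γ).1 := by
    intro γ
    obtain ⟨C, hC, h⟩ := hbd (fun i => γ (Sum.inr i)) (fun i => γ (Sum.inl i))
    have e : Sum.elim (fun i => γ (Sum.inl i)) (fun i => γ (Sum.inr i)) = γ := by
      funext j; rcases j with j | j <;> rfl
    rw [e] at h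
    exact PB_of _ _ hC.le h
  have hPB' : ∀ γ, PB (fderiv ℝ (H γ).1) := fun γ => PB_fderiv fun i => by
    simp only [HH']; exact hPB _
  have hd : ∀ γ, Differentiable ℝ (T k (H γ).1) := fun γ p =>
    (T_hasFDerivAt hk (H γ).2 (hPB γ) (hPB' γ) p).differentiableAt
  have hT : ∀ γ i p, fderiv ℝ (T k (H γ).1) p (bas i) = T k (H (γ + Pi.single i 1)).1 p := by
    intro γ i p
    rw [T_fderiv hk (H γ).2 (hPB γ) (hPB' γ)]
    simp only [HH']
  have hcd : ∀ (N : ℕ) γ, ContDiff ℝ N (T k (H γ).1) := by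
    intro N
    induction N with
    | zero => intro γ; exact contDiff_zero.2 (hd γ).continuous
    | succ N ih =>
      intro γ
      have : ((N + 1 : ℕ) : WithTop ℕ∞) = (N : WithTop ℕ∞) + 1 := by push_cast; rfl
      rw [this, contDiff_succ_iff_fderiv]
      refine ⟨hd γ, by simp, ?_⟩
      have e : fderiv ℝ (T k (H γ).1) = fun p => ∑ i, (crd i).smulRight
          (T k (H (γ + Pi.single i 1)).1 p) := by
        funext p
        conv_lhs => rw [clm_eq_sum (fderiv ℝ (T k (H γ).1) p)]
        simp only [hT]
      rw [e]
      refine ContDiff.sum fun i _ => ?_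
      exact contDiff_const.smulRight (ih _)
  refine ⟨?_, ?_⟩
  · rw [← H0']
    exact contDiff_infty.2 fun N => hcd N 0
  · intro α β
    obtain ⟨C, hC, h⟩ := hbd α β
    set s := (m - ρ * mOrd α + δ * mOrd β) / 2
    refine ⟨C * 2 ^ |s| * (∫ w, ‖k w‖ * wt w.2 ^ |s|) + 1, ?_, fun x ξ => ?_⟩
    · have : 0 ≤ ∫ w, ‖k w‖ * wt w.2 ^ |s| := integral_nonneg fun w => by
        have := wt_pos w.2
        positivity
      positivity
    · have h1 := mixed_family (fun γ => T k (H γ).1) hd hT β α x ξ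
      simp only [H0'] at h1
      rw [h1]
      refine (T_bound hk hC.le h (x, ξ)).trans ?_
      have := wt_pos ξ
      gcongr
      linarith

lemma md_zero {n : ℕ} (F : E n → ℂ) : md 0 F = F := by
  have : ∀ l : List (Fin n), (((l.map fun i => (pd i)^[(0 : Fin n → ℕ) i]).foldr (· ∘ ·) id) F)
      = F := by
    intro l
    induction l with
    | nil => rfl
    | cons i l ih => simpa using ih
  exact this _

lemma mixed_zero {n : ℕ} (σ : E n → E n → ℂ) (x ξ : E n) : mixedD 0 0 σ x ξ = σ x ξ := by
  simp only [mixedD, md_zero]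


lemma expi_norm (t : ℝ) : ‖expi t‖ = 1 := by
  unfold expi
  rw [show 2 * (Real.pi : ℂ) * Complex.I * (t : ℂ) = ((2 * Real.pi * t : ℝ) : ℂ) * Complex.I by
    push_cast; ring]
  exact Complex.norm_exp_ofReal_mul_I _

lemma expi_add (s t : ℝ) : expi (s + t) = expi s * expi t := by
  unfold expi
  rw [← Complex.exp_add]; push_cast; ring_nf

lemma expi_cont : Continuous expi := by
  unfold expi; fun_prop

lemma expi_char (t : ℝ) : ((Real.fourierChar t : Circle) : ℂ) = expi t := by
  rw [Real.fourierChar_apply]; unfold expi; congr 1; push_cast; ring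

lemma dotp_cont {n : ℕ} {X : Type} [TopologicalSpace X] {f g : X → E n} (hf : Continuous f)
    (hg : Continuous g) : Continuous fun x => dotp (f x) (g x) := by
  unfold dotp; fun_prop

lemma dotp_inner {n : ℕ} (y ξ : E n) :
    inner ℝ (WithLp.toLp 2 y) (WithLp.toLp 2 ξ) = dotp y ξ := by
  simp [PiLp.inner_apply, dotp, mul_comm]

open FourierTransform in
lemma fourier_pack {n : ℕ} (f : SchwartzMap (E n) ℂ) : ∃ A : SchwartzMap (E n) ℂ,
    (∀ ξ, FT f ξ = A ξ) ∧ ∀ y, f y = ∫ ξ, A ξ * expi (dotp y ξ) := by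
  let e : EuclideanSpace ℝ (Fin n) ≃L[ℝ] E n := EuclideanSpace.equiv (Fin n) ℝ
  let g : SchwartzMap (EuclideanSpace ℝ (Fin n)) ℂ :=
    SchwartzMap.compCLMOfContinuousLinearEquiv ℂ e f
  let A : SchwartzMap (E n) ℂ := SchwartzMap.compCLMOfContinuousLinearEquiv ℂ e.symm (𝓕 g)
  have hA : ∀ ξ, A ξ = 𝓕 (g : _ → ℂ) (WithLp.toLp 2 ξ) := fun ξ => rfl
  have hemb := (MeasurableEquiv.toLp 2 (Fin n → ℝ)).measurableEmbedding
  refine ⟨A, ?_, ?_⟩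
  · intro ξ
    rw [hA, Real.fourier_eq, ← (PiLp.volume_preserving_toLp (Fin n)).integral_comp hemb]
    unfold FT
    refine integral_congr_ae (Filter.Eventually.of_forall fun y => ?_)
    simp only
    rw [dotp_inner, Circle.smul_def, expi_char, smul_eq_mul, mul_comm]
    rfl
  · intro y
    have h : 𝓕⁻ (𝓕 g) = g := FourierTransform.fourierInv_fourier_eq g
    have h2 : f y = (𝓕⁻ (𝓕 g)) (WithLp.toLp 2 y) := by rw [h]; rfl
    rw [h2, SchwartzMap.fourierInv_coe, Real.fourierInv_eq,
      ← (PiLp.volume_preserving_toLp (Fin n)).integral_comp hemb]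
    refine integral_congr_ae (Filter.Eventually.of_forall fun ξ => ?_)
    simp only
    rw [dotp_inner, Circle.smul_def, expi_char, smul_eq_mul, mul_comm]
    have hd : dotp ξ y = dotp y ξ := by simp [dotp, mul_comm]
    rw [hd]
    rfl

lemma dotp_sub_left {n : ℕ} (x y z : E n) : dotp (x - y) z = dotp x z - dotp y z := by
  simp [dotp, sub_mul, Finset.sum_sub_distrib]

lemma dotp_add_left {n : ℕ} (x y z : E n) : dotp (x + y) z = dotp x z + dotp y z := by
  simp [dotp, add_mul, Finset.sum_add_distrib]

lemma dotp_sub_right {n : ℕ} (x y z : E n) : dotp x (y - z) = dotp x y - dotp x z := by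
  simp [dotp, mul_sub, Finset.sum_sub_distrib]

lemma wt_le_pow {n : ℕ} (ξ : E n) : wt ξ ≤ (1 + n) * (1 + ‖ξ‖) ^ 2 := by
  have h : ∑ i, ξ i ^ 2 ≤ ∑ _i : Fin n, ‖ξ‖ ^ 2 := Finset.sum_le_sum fun i _ => by
    rw [← sq_abs, ← Real.norm_eq_abs]
    gcongr
    exact norm_le_pi_norm ξ i
  simp at h
  have h0 := norm_nonneg ξ
  have h1 : (0 : ℝ) ≤ n := Nat.cast_nonneg n
  simp only [wt]
  nlinarith [mul_nonneg h1 h0]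

lemma schwartz_wt {n : ℕ} (A : SchwartzMap (E n) ℂ) (s : ℝ) :
    Integrable fun ξ => ‖A ξ‖ * wt ξ ^ s := by
  obtain ⟨N, hN⟩ := exists_nat_ge s
  have hi : Integrable fun ξ : E n => (1 + ‖ξ‖) ^ (2 * N) * ‖A ξ‖ := by
    have h1 := ((A.integrable.norm).add (A.integrable_pow_mul volume (2 * N))).const_mul
      ((2 : ℝ) ^ (2 * N))
    refine Integrable.mono' h1 ?_ (Filter.Eventually.of_forall fun ξ => ?_)
    · have := A.continuous
      exact Continuous.aestronglyMeasurable (by fun_prop)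
    · rw [Real.norm_of_nonneg (by positivity)]
      have h2 : (1 + ‖ξ‖) ^ (2 * N) ≤ 2 ^ (2 * N) * (1 + ‖ξ‖ ^ (2 * N)) := by
        rcases le_total ‖ξ‖ 1 with h | h
        · calc (1 + ‖ξ‖) ^ (2 * N) ≤ 2 ^ (2 * N) := by gcongr; linarith
            _ ≤ _ := by
              have : 0 ≤ ‖ξ‖ ^ (2 * N) := by positivity
              have h3 : (0 : ℝ) < 2 ^ (2 * N) := by positivity
              nlinarith
        · calc (1 + ‖ξ‖) ^ (2 * N) ≤ (2 * ‖ξ‖) ^ (2 * N) := by gcongr; linarith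
            _ = 2 ^ (2 * N) * ‖ξ‖ ^ (2 * N) := mul_pow _ _ _
            _ ≤ _ := by gcongr; linarith
      calc (1 + ‖ξ‖) ^ (2 * N) * ‖A ξ‖ ≤ 2 ^ (2 * N) * (1 + ‖ξ‖ ^ (2 * N)) * ‖A ξ‖ := by gcongr
        _ = _ := by simp only [Pi.add_apply]; ring
  refine Integrable.mono' (hi.const_mul ((1 + n : ℝ) ^ N)) ?_
    (Filter.Eventually.of_forall fun ξ => ?_)
  · refine Continuous.aestronglyMeasurable (A.continuous.norm.mul
      (wt_cont.rpow_const fun ξ => Or.inl (wt_pos ξ).ne'))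
  · have hp := wt_pos ξ
    rw [Real.norm_of_nonneg (by positivity)]
    calc ‖A ξ‖ * wt ξ ^ s ≤ ‖A ξ‖ * wt ξ ^ (N : ℝ) := by
          gcongr
          exact one_le_wt ξ
      _ = ‖A ξ‖ * wt ξ ^ N := by rw [Real.rpow_natCast]
      _ ≤ ‖A ξ‖ * ((1 + n) * (1 + ‖ξ‖) ^ 2) ^ N := by
          gcongr
          exact wt_le_pow ξ
      _ = _ := by rw [mul_pow, pow_mul]; ring

/-- The kernel. -/
noncomputable def ker {n : ℕ} (a A : SchwartzMap (E n) ℂ) (w : P n) : ℂ :=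
  expi (dotp w.1 w.2) * A w.2 * (starRingEnd ℂ) (a w.1)

lemma ker_adm {n : ℕ} (a A : SchwartzMap (E n) ℂ) : Adm (ker a A) := by
  constructor
  · have h1 := a.continuous
    have h2 := A.continuous
    have h3 := expi_cont.comp (dotp_cont (continuous_fst (X := E n) (Y := E n)) continuous_snd)
    unfold ker
    exact (h3.mul (h2.comp continuous_snd)).mul
      (Complex.continuous_conj.comp (h1.comp continuous_fst))
  · intro s
    have := ((a.integrable (μ := volume)).norm).mul_prod (schwartz_wt A s)
    refine this.congr (Filter.Eventually.of_forall fun w => ?_)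
    simp only [ker, norm_mul, expi_norm, RCLike.norm_conj]
    ring

lemma barg_eq {n : ℕ} {a A f F : SchwartzMap (E n) ℂ} (hA : ∀ ξ, FT a ξ = A ξ)
    (hF : ∀ y, f y = ∫ ξ, F ξ * expi (dotp y ξ)) (x ξ : E n) :
    Barg a f x ξ = ∫ η, F η * (expi (-(dotp x (ξ - η))) * A (ξ - η)) := by
  have hinner : ∀ η, ∫ z, a (z - x) * expi (-(dotp z (ξ - η))) =
      expi (-(dotp x (ξ - η))) * A (ξ - η) := by
    intro η
    rw [← integral_add_right_eq_self _ x, ← hA, FT, ← integral_const_mul]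
    refine integral_congr_ae (Filter.Eventually.of_forall fun z => ?_)
    simp only [add_sub_cancel_right]
    rw [dotp_add_left, neg_add, expi_add]; ring
  simp only [← hinner, ← integral_const_mul]
  have hc1 := a.continuous
  have hc2 := F.continuous
  rw [integral_integral_swap]
  · unfold Barg
    refine integral_congr_ae (Filter.Eventually.of_forall fun z => ?_)
    simp only
    rw [hF z, mul_assoc, ← integral_mul_const]
    refine integral_congr_ae (Filter.Eventually.of_forall fun η => ?_)
    simp only
    rw [dotp_sub_right, show -(dotp z ξ - dotp z η) = dotp z η + -dotp z ξ by ring, expi_add]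
    ring
  · have h := (F.integrable (μ := volume)).norm.mul_prod ((a.integrable (μ := volume)).comp_sub_right x).norm
    refine Integrable.mono' h ?_ (Filter.Eventually.of_forall fun w => ?_)
    · refine Continuous.aestronglyMeasurable ?_
      have h3 := expi_cont.comp (dotp_cont (continuous_snd (X := E n) (Y := E n))
        (continuous_const.sub continuous_fst : Continuous fun w : E n × E n => ξ - w.1)).neg
      exact (hc2.comp continuous_fst).mul ((hc1.comp (continuous_snd.sub continuous_const)).mul h3)
    · simp only [Function.uncurry, norm_mul, expi_norm]
      simp

lemma wick_eq {n : ℕ} {a A f F : SchwartzMap (E n) ℂ} (hA : ∀ ξ, FT a ξ = A ξ)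
    (hF : ∀ y, f y = ∫ ξ, F ξ * expi (dotp y ξ)) (hF' : ∀ ξ, FT f ξ = F ξ)
    {σ : E n → E n → ℂ} (hσc : Continuous fun p : P n => σ p.1 p.2) {C : ℝ}
    (hb : ∀ p : P n, ‖σ p.1 p.2‖ ≤ C) (y : E n) :
    WickOp a σ f y = ∫ η, expi (dotp y η) * T (ker a A) (fun p => σ p.1 p.2) (y, η) * FT f η := by
  -- the common double integrand
  let Q : P n → E n → ℂ := fun p η => σ p.1 p.2 * (F η * (expi (-(dotp p.1 (p.2 - η))) *
    A (p.2 - η))) * (starRingEnd ℂ) (a (y - p.1)) * expi (dotp y p.2)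
  have hL : WickOp a σ f y = ∫ p, ∫ η, Q p η := by
    unfold WickOp
    refine integral_congr_ae (Filter.Eventually.of_forall fun p => ?_)
    simp only [Q]
    rw [barg_eq hA hF, integral_mul_const, integral_mul_const, integral_const_mul]
  have hR : ∀ η, expi (dotp y η) * T (ker a A) (fun p => σ p.1 p.2) (y, η) * FT f η =
      ∫ p, Q p η := by
    intro η
    let φ : P n → P n := fun p => (y - p.1, p.2 - η)
    have hφ : MeasurePreserving φ := by
      exact (Measure.measurePreserving_sub_left volume y).prod (measurePreserving_sub_right volume η)
    have hφe : MeasurableEmbedding φ := by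
      exact (MeasurableEquiv.prodCongr (MeasurableEquiv.subLeft y)
        (MeasurableEquiv.subRight η)).measurableEmbedding
    rw [T, ← hφ.integral_comp hφe, ← integral_const_mul, ← integral_mul_const]
    refine integral_congr_ae (Filter.Eventually.of_forall fun p => ?_)
    simp only [Q, φ, sh, ker, hF', sub_sub_cancel, add_sub_cancel]
    have : expi (dotp y η) * expi (dotp (y - p.1) (p.2 - η)) =
        expi (-(dotp p.1 (p.2 - η))) * expi (dotp y p.2) := by
      rw [← expi_add, ← expi_add]
      congr 1
      rw [dotp_sub_left, dotp_sub_right y]; ring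
    linear_combination (A (p.2 - η) * (starRingEnd ℂ) (a (y - p.1)) * σ p.1 p.2 * F η) * this
  rw [hL, integral_integral_swap]
  · exact integral_congr_ae (Filter.Eventually.of_forall fun η => (hR η).symm)
  · have h1 := (F.integrable (μ := volume)).norm.convolution_integrand (ContinuousLinearMap.mul ℝ ℝ)
      (A.integrable (μ := volume)).norm
    have h2 := ((a.integrable (μ := volume)).comp_sub_left y).norm.mul_prod h1
    have h3 := (measurePreserving_prodAssoc (volume : Measure (E n)) (volume : Measure (E n))
      (volume : Measure (E n))).integrable_comp_emb
      (MeasurableEquiv.prodAssoc.measurableEmbedding) |>.2 h2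
    refine Integrable.mono' (h3.const_mul C) ?_ (Filter.Eventually.of_forall fun w => ?_)
    · refine Continuous.aestronglyMeasurable ?_
      have c1 := a.continuous
      have c2 := F.continuous
      have c3 := A.continuous
      have d1 : Continuous fun w : P n × E n => w.1.1 := by fun_prop
      have d2 : Continuous fun w : P n × E n => w.1.2 := by fun_prop
      have d3 : Continuous fun w : P n × E n => w.1.2 - w.2 := by fun_prop
      have e1 := expi_cont.comp (dotp_cont d1 d3).neg
      have e2 := expi_cont.comp (dotp_cont (continuous_const (y := y)) d2)
      exact (((hσc.comp continuous_fst).mul ((c2.comp continuous_snd).mul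
        (e1.mul (c3.comp d3)))).mul (Complex.continuous_conj.comp
          (c1.comp (continuous_const.sub d1)))).mul e2
    · obtain ⟨⟨x, ξ⟩, η⟩ := w
      simp only [Function.uncurry, Q, norm_mul, expi_norm, RCLike.norm_conj, Function.comp_apply,
        MeasurableEquiv.prodAssoc, MeasurableEquiv.coe_mk, Equiv.prodAssoc_apply,
        ContinuousLinearMap.mul_apply']
      have := hb (x, ξ)
      calc _ = ‖σ x ξ‖ * (‖a (y - x)‖ * (‖F η‖ * ‖A (ξ - η)‖)) := by ring
        _ ≤ _ := by gcongr

end WK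

/-- the Wick quantization of a symbol of order `m ≤ 0` is a
Kohn–Nirenberg pseudodifferential operator of order `m`. -/
theorem wick_is_KN (n : ℕ) (hn : 1 ≤ n)
    (m ρ δ : ℝ) (hm : m ≤ 0) (hρ : ρ ≤ 1) (hδρ : δ ≤ ρ) (hδ0 : 0 ≤ δ) (hδ1 : δ < 1)
    (a : SchwartzMap (Fin n → ℝ) ℂ) (ha : (∫ y, ‖a y‖ ^ 2) = 1)
    (σ : (Fin n → ℝ) → (Fin n → ℝ) → ℂ) (hσ : SymbolClass m ρ δ σ) :
    ∃ τ : (Fin n → ℝ) → (Fin n → ℝ) → ℂ, SymbolClass m ρ δ τ ∧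
      ∀ (f : SchwartzMap (Fin n → ℝ) ℂ) (x : Fin n → ℝ),
        WickOp (⇑a) σ (⇑f) x = ∫ ξ, expi (dotp x ξ) * τ x ξ * FT (⇑f) ξ := by
  obtain ⟨A, hA, -⟩ := WK.fourier_pack a
  refine ⟨fun x ξ => WK.T (WK.ker a A) (fun p => σ p.1 p.2) (x, ξ),
    WK.T_symbol (WK.ker_adm a A) hσ, fun f x => ?_⟩
  obtain ⟨F, hF', hF⟩ := WK.fourier_pack f
  obtain ⟨C, hC, h⟩ := hσ.2 0 0
  refine WK.wick_eq hA hF hF' hσ.1.continuous (C := C) (fun p => ?_) x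
  have h1 := WK.mixed_zero σ p.1 p.2 ▸ h p.1 p.2
  refine h1.trans ?_
  have h2 : wt p.2 ^ ((m - ρ * mOrd (0 : Fin n → ℕ) + δ * mOrd (0 : Fin n → ℕ)) / 2) ≤ 1 := by
    apply Real.rpow_le_one_of_one_le_of_nonpos (WK.one_le_wt _)
    simp [mOrd]; linarith
  calc _ ≤ C * 1 := by gcongr
    _ = C := mul_one C
end
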